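/- arXiv:1610.08849 — 2 statements merged into one kernel-verified Lean document; each statement's English description precedes it below -/
import Mathlib

section
/- For every positive integer n, the n-ladder graph P_n × P_2 has a prime labeling; that is, there exists a bijection f from the vertex set of P_n × P_2 to {1, 2, ..., 2n} such that for every pair of adjacent vertices u and v, gcd(f(u), f(v)) = 1. -/
open SimpleGraph

/-!
If `2 * n < p < 4 * n` with `p` prime, the labels `p - 2 * n, ..., 2 * n` can be put in columns
`(x, p - x)` with coprime entries, and the labels below `p - 2 * n = 2 * m + 1` form a prime
`m`-ladder by induction. The values `x` run down to `2 * m + 1 + d` and then from `2 * m + 1` up to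
`2 * m + d`; only the fold and the junction with the `m`-ladder impose conditions on `d`. They
forbid at most two residue classes of `d` modulo each odd prime dividing the labels involved, and
one class modulo `2`.

The product over all these conditions of `ψ d - ψ a`, with `ψ` an additive character and `a` a
forbidden class, is a sum of few exponentials in `d`, so it cannot vanish on a long initial
interval. This gives an admissible `d` of size `O((n * (p - 2 * n) ^ 3) ^ (1 / 6))`, which fits
into the ladder when `p` is not too close to `4 * n`. For large `n`, comparing `4 ^ x` with the
prime factorization of `x.centralBinom` at `x = 2 * n` yields such a `p`; for `n` in between,
explicit chains of primes do. For small `n` one can choose `p` such that `2 * m + 1` is prime or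
`1`; then the `m`-ladder with columns `(x, 2 * m + 1 - x)` is joined on with `d = 1`.
-/

/-- The columns of a ladder, in order, with coprime labels along every rung and every rail edge. -/
structure IsCoprimeLadder (L : List (ℕ × ℕ)) : Prop where
  rung : ∀ c ∈ L, c.1.Coprime c.2
  rail : L.IsChain fun c c' => c.1.Coprime c'.1 ∧ c.2.Coprime c'.2

/-- The columns of a prime labeling of the `n`-ladder. Injectivity is not a field: `n` columns
that carry all of `1, ..., 2 * n` carry every label once. -/
structure IsPrimeLadder (n : ℕ) (L : List (ℕ × ℕ)) : Prop extends IsCoprimeLadder L where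
  length_eq : L.length = n
  mem_labels : ∀ x, (∃ c ∈ L, x = c.1 ∨ x = c.2) ↔ 1 ≤ x ∧ x ≤ 2 * n

/-- The columns `(x, p - x)` for `x` in `xs`; their entries are coprime when `p` is prime. -/
def complementColumns (p : ℕ) (xs : List ℕ) : List (ℕ × ℕ) :=
  xs.map fun x => (x, p - x)

lemma IsCoprimeLadder.append {L L' : List (ℕ × ℕ)} (hL : IsCoprimeLadder L)
    (hL' : IsCoprimeLadder L')
    (h : ∀ c ∈ L.getLast?, ∀ c' ∈ L'.head?, c.1.Coprime c'.1 ∧ c.2.Coprime c'.2) :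
    IsCoprimeLadder (L ++ L') where
  rung c hc := (List.mem_append.1 hc).elim (hL.rung c) (hL'.rung c)
  rail := hL.rail.append hL'.rail h

lemma IsPrimeLadder.swap {n : ℕ} {L : List (ℕ × ℕ)} (hL : IsPrimeLadder n L) :
    IsPrimeLadder n (L.map Prod.swap) where
  rung := List.forall_mem_map.2 fun c hc => (hL.rung c hc).symm
  rail := by simpa only [List.isChain_map, Prod.fst_swap, Prod.snd_swap, and_comm] using hL.rail
  length_eq := by rw [List.length_map, hL.length_eq]
  mem_labels x := by
    rw [← hL.mem_labels x]
    constructor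
    · rintro ⟨c, hc, hx⟩
      obtain ⟨c', hc', rfl⟩ := List.mem_map.1 hc
      exact ⟨c', hc', hx.symm⟩
    · rintro ⟨c, hc, hx⟩
      exact ⟨c.swap, List.mem_map_of_mem hc, hx.symm⟩

lemma coprime_of_eq_add_one {x y : ℕ} (h : y = x + 1 ∨ x = y + 1) : x.Coprime y := by
  rcases h with rfl | rfl <;> simp

lemma isCoprimeLadder_complementColumns {p : ℕ} (hp : p.Prime) {xs : List ℕ}
    (hxs : ∀ x ∈ xs, 0 < x ∧ x < p) (hstep : xs.IsChain fun x y => y = x + 1 ∨ x = y + 1) :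
    IsCoprimeLadder (complementColumns p xs) where
  rung := by
    refine List.forall_mem_map.2 fun x hx => ?_
    obtain ⟨hpos, hlt⟩ := hxs x hx
    have hpx : p.Coprime x := hp.coprime_iff_not_dvd.2 (Nat.not_dvd_of_pos_of_lt hpos hlt)
    exact (Nat.coprime_sub_self_right hlt.le).2 hpx.symm
  rail := by
    rw [complementColumns, List.isChain_map]
    refine hstep.imp_of_mem_imp fun x y hx hy hxy => ?_
    have hxp := (hxs x hx).2
    have hyp := (hxs y hy).2
    exact ⟨coprime_of_eq_add_one hxy, coprime_of_eq_add_one (by lia)⟩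

lemma exists_mem_complementColumns {p x : ℕ} {xs : List ℕ} :
    (∃ c ∈ complementColumns p xs, x = c.1 ∨ x = c.2) ↔ x ∈ xs ∨ ∃ y ∈ xs, x = p - y := by
  simp only [complementColumns, List.mem_map, exists_exists_and_eq_and, and_or_left, exists_or,
    exists_eq_right']

lemma isChain_range'_add_one (a n : ℕ) :
    (List.range' a n).IsChain fun x y => y = x + 1 ∨ x = y + 1 :=
  (List.isChain_range' a n 1).imp fun _ _ h => .inl h

lemma isPrimeLadder_nil : IsPrimeLadder 0 [] where
  rung := by simp
  rail := .nil
  length_eq := rfl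
  mem_labels x := by simp only [List.not_mem_nil, false_and, exists_false, false_iff]; lia

lemma isPrimeLadder_complementColumns {n : ℕ} (hp : (2 * n + 1).Prime) :
    IsPrimeLadder n (complementColumns (2 * n + 1) (List.range' 1 n)) where
  toIsCoprimeLadder := isCoprimeLadder_complementColumns hp
    (fun x hx => by rw [List.mem_range'_1] at hx; lia) (isChain_range'_add_one 1 n)
  length_eq := by simp [complementColumns]
  mem_labels x := by
    simp only [exists_mem_complementColumns, List.mem_range'_1]
    refine ⟨by rintro (hx | ⟨y, hy, rfl⟩) <;> lia, fun hx => ?_⟩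
    by_cases hxn : x ≤ n
    · exact .inl (by lia)
    · exact .inr ⟨2 * n + 1 - x, by lia, by lia⟩

/-- The numbers `a, ..., b - 1` in an order of consecutive runs: down from `b - 1` to `a + d`,
then up from `a` to `a + d - 1`. -/
def foldedRange (a d b : ℕ) : List ℕ :=
  (List.range' (a + d) (b - (a + d))).reverse ++ List.range' a d

lemma mem_foldedRange {a d b x : ℕ} (h : a + d ≤ b) :
    x ∈ foldedRange a d b ↔ a ≤ x ∧ x < b := by
  simp only [foldedRange, List.mem_append, List.mem_reverse, List.mem_range'_1]
  lia

lemma getLast?_foldedRange {a d b : ℕ} (hd : 0 < d) :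
    (foldedRange a d b).getLast? = some (a + d - 1) := by
  simp [foldedRange, List.getLast?_append, List.getLast?_range', hd.ne']

lemma isCoprimeLadder_foldedRange {p a d b : ℕ} (hp : p.Prime) (ha : 0 < a) (hab : a + d ≤ b)
    (hbp : b ≤ p) (hda : d.Coprime a) (hdp : d.Coprime (p - a)) :
    IsCoprimeLadder (complementColumns p (foldedRange a d b)) := by
  rw [foldedRange, complementColumns, List.map_append]
  refine .append (isCoprimeLadder_complementColumns hp ?_ ?_)
    (isCoprimeLadder_complementColumns hp ?_ (isChain_range'_add_one a d)) ?_
  · intro x hx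
    rw [List.mem_reverse, List.mem_range'_1] at hx
    lia
  · exact List.isChain_reverse.2 ((isChain_range'_add_one _ _).imp fun _ _ h => h.symm)
  · intro x hx
    rw [List.mem_range'_1] at hx
    lia
  · intro c hc c' hc'
    simp only [List.getLast?_map, List.getLast?_reverse, List.head?_map, List.head?_range',
      Option.mem_def, Option.map_eq_some_iff, Option.ite_none_left_eq_some,
      Option.some.injEq] at hc hc'
    obtain ⟨_, ⟨-, rfl⟩, rfl⟩ := hc
    obtain ⟨_, ⟨-, rfl⟩, rfl⟩ := hc'
    have hsub : p - (a + d) = p - a - d := (Nat.sub_sub p a d).symm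
    exact ⟨Nat.coprime_self_add_left.2 hda,
      hsub ▸ (Nat.coprime_self_sub_left (by lia)).2 hdp⟩

lemma IsPrimeLadder.fold {m n d : ℕ} {L : List (ℕ × ℕ)} (hL : IsPrimeLadder m L)
    (hp : (2 * n + (2 * m + 1)).Prime) (hd : 0 < d) (hdn : m + d ≤ n)
    (hdk : d.Coprime (2 * m + 1)) (hdx : d.Coprime (2 * n))
    (hhead : ∀ c ∈ L.head?, (2 * m + d).Coprime c.1 ∧ (2 * n + 1 - d).Coprime c.2) :
    IsPrimeLadder n
      (complementColumns (2 * n + (2 * m + 1)) (foldedRange (2 * m + 1) d (n + m + 1)) ++ L) where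
  toIsCoprimeLadder := by
    refine (isCoprimeLadder_foldedRange hp (by lia) (by lia) (by lia) hdk
      (by rwa [Nat.add_sub_cancel])).append hL.toIsCoprimeLadder fun c hc c' hc' => ?_
    simp only [complementColumns, List.getLast?_map, getLast?_foldedRange hd, Option.map_some,
      Option.mem_some_iff] at hc
    have h := hhead c' hc'
    rw [← hc]
    convert h using 2 <;> lia
  length_eq := by
    simp only [complementColumns, foldedRange, List.length_append, List.length_map,
      List.length_reverse, List.length_range', hL.length_eq]
    lia
  mem_labels x := by
    simp only [List.mem_append, or_and_right, exists_or, exists_mem_complementColumns,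
      hL.mem_labels, mem_foldedRange (show 2 * m + 1 + d ≤ n + m + 1 by lia)]
    refine ⟨by rintro ((hx | ⟨y, hy, rfl⟩) | hx) <;> lia, fun hx => ?_⟩
    by_cases hxm : x ≤ 2 * m
    · exact .inr ⟨hx.1, hxm⟩
    by_cases hxn : x < n + m + 1
    · exact .inl (.inl (by lia))
    · exact .inl (.inr ⟨2 * n + (2 * m + 1) - x, by lia, by lia⟩)

lemma IsPrimeLadder.exists_labeling {n : ℕ} {L : List (ℕ × ℕ)} (hL : IsPrimeLadder n L) :
    ∃ f : Fin n × Fin 2 → ℕ,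
      Set.BijOn f Set.univ (Set.Icc 1 (2 * n)) ∧
      ∀ u v, (pathGraph n □ pathGraph 2).Adj u v → (f u).Coprime (f v) := by
  obtain ⟨hL, rfl, hlabels⟩ := hL
  let f : Fin L.length × Fin 2 → ℕ := fun v => ![L[v.1].1, L[v.1].2] v.2
  have hrange : Set.range f = Set.Icc 1 (2 * L.length) := by
    ext x
    rw [Set.mem_Icc, ← hlabels]
    simp only [Set.mem_range, Prod.exists, Fin.exists_fin_two, List.exists_mem_iff_get, f]
    simp [eq_comm]
  have hinj : f.Injective := by
    rw [← Set.injOn_univ, ← Set.ncard_image_iff (Set.toFinite _), Set.image_univ, hrange]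
    simp [Set.ncard_eq_toFinset_card', mul_comm]
  have hrail (r : Fin 2) (i j : Fin L.length) (hij : i.val + 1 = j.val) :
      (f (i, r)).Coprime (f (j, r)) := by
    have h := List.isChain_iff_getElem.1 hL.rail i (hij ▸ j.isLt)
    simp only [hij] at h
    fin_cases r
    exacts [h.1, h.2]
  have hrung (i : Fin L.length) : (f (i, 0)).Coprime (f (i, 1)) := hL.rung _ (L.getElem_mem _)
  refine ⟨f, ⟨fun v _ => hrange ▸ Set.mem_range_self v, hinj.injOn, ?_⟩, ?_⟩
  · rw [Set.SurjOn, Set.image_univ, hrange]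
  · rintro ⟨i, r⟩ ⟨j, s⟩ h
    simp only [boxProd_adj, pathGraph_adj] at h
    rcases h with ⟨hij | hij, rfl⟩ | ⟨hrs, rfl⟩
    · exact hrail r i j hij
    · exact (hrail r j i hij).symm
    · fin_cases r <;> fin_cases s <;> simp at hrs
      exacts [hrung i, (hrung i).symm]

section Sieve

open Finset Polynomial

lemma sum_mul_pow_eq_zero {R ι : Type*} [CommRing R] (s : Finset ι) (c μ : ι → R)
    (h : ∀ d < #s, ∑ i ∈ s, c i * μ i ^ d = 0) (d : ℕ) : ∑ i ∈ s, c i * μ i ^ d = 0 := by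
  classical
  induction s using Finset.induction_on generalizing c d with
  | empty => rfl
  | insert i s hi ih =>
    -- Shifting `d` by one and subtracting `μ i` times the sum removes the `i`-th exponential.
    have hdiff (d : ℕ) : ∑ j ∈ s, c j * (μ j - μ i) * μ j ^ d =
        ∑ j ∈ insert i s, c j * μ j ^ (d + 1) - μ i * ∑ j ∈ insert i s, c j * μ j ^ d := by
      rw [sum_insert hi, sum_insert hi, mul_add, add_sub_add_comm, mul_sum, ← sum_sub_distrib]
      have : c i * μ i ^ (d + 1) - μ i * (c i * μ i ^ d) = 0 := by ring
      rw [this, zero_add]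
      exact sum_congr rfl fun j _ => by ring
    rw [card_insert_of_notMem hi] at h
    have hzero := ih (fun j => c j * (μ j - μ i)) fun d hd => by
      rw [hdiff, h _ (by lia), h _ (by lia), mul_zero, sub_zero]
    induction d with
    | zero => exact h 0 (by lia)
    | succ d ihd => simpa only [hdiff, ihd, mul_zero, sub_zero] using hzero d

lemma stdAddChar_natCast {N : ℕ} [NeZero N] (d : ℕ) :
    ZMod.stdAddChar (d : ZMod N) = ZMod.stdAddChar (1 : ZMod N) ^ d := by
  rw [← AddChar.map_nsmul_eq_pow, nsmul_one]

/-- The product over all `i` and all `a ∈ R i` of `ψ d - ψ a`, where `ψ` is the standard character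
of `ZMod (m i)`, vanishes exactly when `d` meets some `R i`. Expanded, it is a combination of
`∏ i, (#(R i) + 1)` exponentials in `d`. -/
theorem exists_lt_prod_forall_natCast_notMem {ι : Type*} [Fintype ι] {m : ι → ℕ}
    [∀ i, NeZero (m i)] (R : ∀ i, Finset (ZMod (m i)))
    (h : ∃ d : ℕ, ∀ i, (d : ZMod (m i)) ∉ R i) :
    ∃ d < ∏ i, (#(R i) + 1), ∀ i, (d : ZMod (m i)) ∉ R i := by
  classical
  let P (i : ι) : ℂ[X] := ∏ a ∈ R i, (X - C (ZMod.stdAddChar a))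
  let ζ (i : ι) : ℂ := ZMod.stdAddChar (1 : ZMod (m i))
  have hP (d : ℕ) : ∏ i, (P i).eval (ζ i ^ d) = 0 ↔ ∃ i, (d : ZMod (m i)) ∈ R i := by
    simp only [prod_eq_zero_iff, mem_univ, true_and, P, ζ, eval_prod, eval_sub, eval_X, eval_C,
      sub_eq_zero, ← stdAddChar_natCast, ZMod.injective_stdAddChar.eq_iff, exists_eq_right']
  have hexpand (d : ℕ) : ∏ i, (P i).eval (ζ i ^ d) =
      ∑ e ∈ Fintype.piFinset fun i => range (#(R i) + 1),
        (∏ i, (P i).coeff (e i)) * (∏ i, ζ i ^ e i) ^ d := by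
    have hdeg (i : ι) : (P i).natDegree = #(R i) := natDegree_finsetProd_X_sub_C_eq_card ..
    simp only [eval_eq_sum_range, hdeg, prod_univ_sum, prod_mul_distrib, ← prod_pow, ← pow_mul,
      mul_comm d]
  by_contra! hall
  obtain ⟨d, hd⟩ := h
  refine (not_exists.2 hd) ((hP d).1 ?_)
  rw [hexpand]
  refine sum_mul_pow_eq_zero _ _ _ (fun d hd => ?_) d
  rw [Fintype.card_piFinset] at hd
  simp only [card_range] at hd
  rw [← hexpand, hP]
  exact hall d hd

lemma exists_natCast_notMem_of_pairwise_coprime {ι : Type*} [Finite ι] {m : ι → ℕ}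
    (hm : Pairwise (Function.onFun Nat.Coprime m)) (R : ∀ i, Finset (ZMod (m i)))
    (hR : ∀ i, #(R i) < m i) : ∃ d : ℕ, ∀ i, (d : ZMod (m i)) ∉ R i := by
  cases nonempty_fintype ι
  have (i : ι) : NeZero (m i) := ⟨((Nat.zero_le _).trans_lt (hR i)).ne'⟩
  have (i : ι) : ∃ a, a ∉ R i := by
    by_contra! h
    have := hR i
    rw [eq_univ_iff_forall.2 h, card_univ, ZMod.card] at this
    exact this.ne rfl
  choose a ha using this
  obtain ⟨d, hd⟩ := Nat.chineseRemainderOfFinset (fun i => (a i).val) m univ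
    (fun i _ => NeZero.ne _) (fun i _ j _ hij => hm hij)
  refine ⟨d, fun i => ?_⟩
  rw [(ZMod.natCast_eq_natCast_iff _ _ _).2 (hd i (mem_univ i)), ZMod.natCast_zmod_val]
  exact ha i

/-- The least admissible factors in `prod_pow_six_le` for a prime `l`. At `l = 2` a single class is
avoided, so only `2 ^ 6 ≤ 32 * 2` is needed; an odd `l` may take `2 ^ 6` at cost `l` or `3 ^ 6` at
cost `l ^ 2`. -/
def sieveWeight (l : ℕ) : ℚ :=
  if l = 2 then 32 else max 1 (max (64 / l) (729 / l ^ 2))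

/-- The product of `sieveWeight l` over the primes `l < 64`, rounded up; further primes have
weight `1`. -/
def sieveConstant : ℕ := 40326708130

lemma one_le_sieveWeight (l : ℕ) : 1 ≤ sieveWeight l := by
  rw [sieveWeight]
  split_ifs
  · norm_num
  · exact le_max_left _ _

lemma sieveWeight_eq_one {l : ℕ} (hl : 64 ≤ l) : sieveWeight l = 1 := by
  have hl' : (64 : ℚ) ≤ l := by exact_mod_cast hl
  rw [sieveWeight, if_neg (by lia), max_eq_left]
  refine max_le ?_ ?_ <;> rw [div_le_one (by positivity)] <;> nlinarith

lemma two_pow_six_le_sieveWeight_mul {l : ℕ} (hl : 2 ≤ l) : 2 ^ 6 ≤ sieveWeight l * l := by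
  have hl' : (2 : ℚ) ≤ l := by exact_mod_cast hl
  rw [sieveWeight]
  split_ifs with h
  · linarith
  · rw [← div_le_iff₀ (by positivity)]
    exact (le_of_eq (by norm_num)).trans ((le_max_left _ _).trans (le_max_right _ _))

lemma three_pow_six_le_sieveWeight_mul {l : ℕ} (hl : 2 < l) :
    3 ^ 6 ≤ sieveWeight l * (l * l) := by
  have : (2 : ℚ) < l := by exact_mod_cast hl
  rw [sieveWeight, if_neg (by lia), ← div_le_iff₀ (by positivity), ← sq]
  exact (le_of_eq (by norm_num)).trans ((le_max_right _ _).trans (le_max_right _ _))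

lemma prod_sieveWeight_le {S : Finset ℕ} (hS : ∀ l ∈ S, l.Prime) :
    ∏ l ∈ S, sieveWeight l ≤ sieveConstant := by
  have hprimes : (range 64).filter Nat.Prime =
      {2, 3, 5, 7, 11, 13, 17, 19, 23, 29, 31, 37, 41, 43, 47, 53, 59, 61} := by decide +kernel
  calc ∏ l ∈ S, sieveWeight l
    _ = ∏ l ∈ S with l < 64, sieveWeight l := by
      refine (prod_subset (filter_subset _ _) fun l hl hl' => sieveWeight_eq_one ?_).symm
      exact not_lt.1 fun h => hl' (mem_filter.2 ⟨hl, h⟩)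
    _ ≤ ∏ l ∈ range 64 with l.Prime, sieveWeight l := by
      refine prod_le_prod_of_subset_of_one_le (fun l hl => ?_)
        (fun l _ => zero_le_one.trans (one_le_sieveWeight l)) fun l _ _ => one_le_sieveWeight l
      rw [mem_filter] at hl
      exact mem_filter.2 ⟨mem_range.2 hl.2, hS l hl.1⟩
    _ ≤ sieveConstant := by
      rw [hprimes]
      norm_num [sieveWeight, sieveConstant]

lemma prod_ite_dvd_le {S : Finset ℕ} (hS : ∀ l ∈ S, l.Prime) {X : ℕ} (hX : X ≠ 0) :
    ∏ l ∈ S, (if l ∣ X then l else 1) ≤ X := by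
  rw [← prod_filter]
  refine Nat.le_of_dvd hX.pos (prod_primes_dvd X (fun l hl => ?_) fun l hl => (mem_filter.1 hl).2)
  exact (hS l (mem_filter.1 hl).1).prime

lemma prod_pow_six_le {X Y : ℕ} (hX : X ≠ 0) (hY : Y ≠ 0) (w : ℕ → ℕ)
    (hw : ∀ l ∈ (X * Y).primeFactors, w l ≤ 2 ∨ w l ≤ 3 ∧ l ≠ 2 ∧ l ∣ X ∧ l ∣ Y) :
    (∏ l ∈ (X * Y).primeFactors, w l) ^ 6 ≤ sieveConstant * (X * Y) := by
  have hprime : ∀ l ∈ (X * Y).primeFactors, l.Prime := fun l => Nat.prime_of_mem_primeFactors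
  have hterm : ∀ l ∈ (X * Y).primeFactors, (w l : ℚ) ^ 6 ≤
      sieveWeight l * ((if l ∣ X then l else 1 : ℕ) * (if l ∣ Y then l else 1 : ℕ)) := by
    intro l hl
    have hl2 := (hprime l hl).two_le
    have hpos := one_le_sieveWeight l
    rcases hw l hl with h | ⟨h, hne, hlX, hlY⟩
    · have h6 : (w l : ℚ) ^ 6 ≤ 2 ^ 6 := by gcongr; exact_mod_cast h
      refine h6.trans ((two_pow_six_le_sieveWeight_mul hl2).trans ?_)
      have hdvd := (hprime l hl).dvd_mul.1 (Nat.dvd_of_mem_primeFactors hl)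
      have hle : l ≤ (if l ∣ X then l else 1) * (if l ∣ Y then l else 1) := by
        split_ifs
        · exact Nat.le_mul_self l
        · rw [mul_one]
        · rw [one_mul]
        · tauto
      gcongr
      exact_mod_cast hle
    · have h6 : (w l : ℚ) ^ 6 ≤ 3 ^ 6 := by gcongr; exact_mod_cast h
      rw [if_pos hlX, if_pos hlY]
      exact h6.trans (three_pow_six_le_sieveWeight_mul (by lia))
  have hcast : ((∏ l ∈ (X * Y).primeFactors, w l : ℕ) : ℚ) ^ 6 ≤ sieveConstant * (X * Y) := by
    calc ((∏ l ∈ (X * Y).primeFactors, w l : ℕ) : ℚ) ^ 6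
      _ = ∏ l ∈ (X * Y).primeFactors, (w l : ℚ) ^ 6 := by rw [Nat.cast_prod, prod_pow]
      _ ≤ ∏ l ∈ (X * Y).primeFactors, _ := prod_le_prod (fun l _ => by positivity) hterm
      _ ≤ sieveConstant * (X * Y) := by
        simp only [prod_mul_distrib, ← Nat.cast_prod]
        gcongr
        exacts [prod_sieveWeight_le hprime, prod_ite_dvd_le hprime hX, prod_ite_dvd_le hprime hY]
  exact_mod_cast hcast

theorem exists_coprime_forall_not_modEq {X Y : ℕ} (hX : X ≠ 0) (hY : Y ≠ 0) (r : ℕ → ℤ) :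
    ∃ d : ℕ, d ^ 6 < sieveConstant * (X * Y) ∧ d.Coprime X ∧
      ∀ l, l.Prime → l ≠ 2 → l ∣ Y → ¬ (d : ℤ) ≡ r l [ZMOD l] := by
  classical
  let S := (X * Y).primeFactors
  have hS (l : S) : (l : ℕ).Prime := Nat.prime_of_mem_primeFactors l.2
  have (l : S) : NeZero (l : ℕ) := ⟨(hS l).ne_zero⟩
  let R (l : ℕ) : Finset (ZMod l) :=
    (if l ∣ X then {0} else ∅) ∪ (if l ≠ 2 ∧ l ∣ Y then {(r l : ZMod l)} else ∅)
  have hR (l : ℕ) : #(R l) ≤ 1 ∨ #(R l) ≤ 2 ∧ l ≠ 2 ∧ l ∣ X ∧ l ∣ Y := by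
    by_cases hl : l ≠ 2 ∧ l ∣ Y <;> by_cases hX : l ∣ X <;>
      simp [R, hl, hX, Finset.card_le_two]
  have hcop : Pairwise (Function.onFun Nat.Coprime fun l : S => (l : ℕ)) := fun l l' h =>
    (Nat.coprime_primes (hS l) (hS l')).2 (Subtype.coe_injective.ne h)
  obtain ⟨d, hd, hdR⟩ := exists_lt_prod_forall_natCast_notMem (fun l : S => R l)
    (exists_natCast_notMem_of_pairwise_coprime hcop _ fun l => by
      have := (hS l).two_le
      have := hR l
      lia)
  rw [prod_coe_sort S fun l => #(R l) + 1] at hd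
  refine ⟨d, ?_, ?_, ?_⟩
  · refine (Nat.pow_lt_pow_left hd (by norm_num)).trans_le (prod_pow_six_le hX hY _ fun l _ => ?_)
    have := hR l
    lia
  · refine Nat.coprime_of_dvd fun l hl hld hlX => ?_
    refine hdR ⟨l, Nat.mem_primeFactors.2 ⟨hl, hlX.mul_right Y, mul_ne_zero hX hY⟩⟩ ?_
    simp [R, hlX, (ZMod.natCast_eq_zero_iff d l).2 hld]
  · intro l hl hl2 hlY hd
    refine hdR ⟨l, Nat.mem_primeFactors.2 ⟨hl, hlY.mul_left X, mul_ne_zero hX hY⟩⟩ ?_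
    have := (ZMod.intCast_eq_intCast_iff _ _ l).2 hd
    rw [Int.cast_natCast] at this
    simp [R, hl2, hlY, this]

end Sieve

/-- A prime `p` between `x` and `2 * x` that leaves enough room to fold a ladder with `x` labels
along the columns `(y, p - y)`: `p - x` is the least label used by them, and `(2 * x - p) / 2`
bounds the possible folding positions. -/
structure IsFoldingPrime (x p : ℕ) : Prop where
  prime : p.Prime
  lt : x < p
  lt_two_mul : p < 2 * x
  le_pow : 64 * sieveConstant * x * (p - x) ^ 3 ≤ (2 * x - p) ^ 6

lemma exists_isPrimeLadder_of_sieve {m n u v : ℕ} {L : List (ℕ × ℕ)}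
    (hL : IsPrimeLadder m ((u, v) :: L)) (hv : Odd v) (hp : (2 * n + (2 * m + 1)).Prime)
    (hmn : m < n)
    (hsize : 64 * sieveConstant * (2 * n) * (2 * m + 1) ^ 3 ≤ (2 * (n - m) - 1) ^ 6) :
    ∃ L', IsPrimeLadder n L' := by
  have huv : u.Coprime v := hL.rung (u, v) List.mem_cons_self
  have hu := (hL.mem_labels u).1 ⟨(u, v), List.mem_cons_self, .inl rfl⟩
  have hv' := (hL.mem_labels v).1 ⟨(u, v), List.mem_cons_self, .inr rfl⟩
  have hX : 2 * n * (2 * m + 1) ≠ 0 := mul_ne_zero (by lia) (by lia)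
  have hY : u * v ≠ 0 := mul_ne_zero (by lia) (by lia)
  -- A prime dividing `u` must not divide `2 * m + d`, and one dividing `v` must not divide
  -- `2 * n + 1 - d`: these are the entries of the last folded column.
  obtain ⟨d, hd, hdX, hdY⟩ := exists_coprime_forall_not_modEq hX hY
    fun l => if l ∣ u then -(2 * m : ℕ) else (2 * n + 1 : ℕ)
  have hdn : 2 * d < 2 * (n - m) - 1 := by
    refine lt_of_pow_lt_pow_left' 6 ?_
    calc (2 * d) ^ 6
      _ = 64 * d ^ 6 := by ring
      _ < 64 * (sieveConstant * (2 * n * (2 * m + 1) * (u * v))) := by gcongr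
      _ ≤ 64 * (sieveConstant * (2 * n * (2 * m + 1) * ((2 * m + 1) * (2 * m + 1)))) := by
        gcongr <;> lia
      _ = 64 * sieveConstant * (2 * n) * (2 * m + 1) ^ 3 := by ring
      _ ≤ _ := hsize
  have hdk : d.Coprime (2 * m + 1) := hdX.coprime_mul_left_right
  have hdn' : d.Coprime (2 * n) := hdX.coprime_mul_right_right
  have hdodd : Odd d := Nat.coprime_two_right.1 hdn'.coprime_mul_right_right
  refine ⟨_, hL.fold hp hdodd.pos (by lia) hdk hdn' ?_⟩
  simp only [List.head?_cons, Option.mem_some_iff, forall_eq']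
  constructor
  · have hmd : Odd (2 * m + d) := (even_two_mul m).add_odd hdodd
    refine Nat.coprime_of_dvd fun l hl hld hlu => ?_
    have hl2 : l ≠ 2 := by rintro rfl; exact hmd.not_two_dvd_nat hld
    refine hdY l hl hl2 (hlu.mul_right v) ?_
    rw [if_pos hlu, Int.modEq_comm, Int.modEq_iff_dvd, sub_neg_eq_add, add_comm]
    exact_mod_cast hld
  · refine Nat.coprime_of_dvd fun l hl hld hlv => ?_
    have hl2 : l ≠ 2 := by rintro rfl; exact hv.not_two_dvd_nat hlv
    have hlu : ¬ l ∣ u := fun hlu => hl.not_dvd_one (huv ▸ Nat.dvd_gcd hlu hlv)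
    refine hdY l hl hl2 (hlv.mul_left u) ?_
    rw [if_neg hlu, Int.modEq_iff_dvd, ← Nat.cast_sub (by lia)]
    exact_mod_cast hld

lemma exists_isPrimeLadder_of_hairpin {m n : ℕ} (hmn : m < n) (hp : (2 * n + (2 * m + 1)).Prime)
    (hm : m = 0 ∨ (2 * m + 1).Prime) : ∃ L, IsPrimeLadder n L := by
  rcases hm with rfl | hm
  · exact ⟨_, isPrimeLadder_complementColumns hp⟩
  · refine ⟨_, (isPrimeLadder_complementColumns hm).swap.fold hp one_pos (by lia)
      (Nat.coprime_one_left _) (Nat.coprime_one_left _) ?_⟩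
    intro c hc
    simp only [complementColumns, List.map_map, List.head?_map, List.head?_range', Option.mem_def,
      Option.map_eq_some_iff, Option.ite_none_left_eq_some, Option.some.injEq] at hc
    obtain ⟨_, ⟨-, rfl⟩, rfl⟩ := hc
    exact ⟨coprime_of_eq_add_one (.inr rfl), Nat.coprime_one_right _⟩

lemma IsFoldingPrime.exists_isPrimeLadder {n p : ℕ} (h : IsFoldingPrime (2 * n) p)
    (ih : ∀ m < n, ∃ L, IsPrimeLadder m L) : ∃ L, IsPrimeLadder n L := by
  obtain ⟨r, hr⟩ := h.prime.odd_of_ne_two (by have := h.lt; have := h.lt_two_mul; lia)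
  obtain ⟨m, rfl⟩ : ∃ m, p = 2 * n + (2 * m + 1) := ⟨r - n, by have := h.lt; lia⟩
  have hmn : m < n := by have := h.lt_two_mul; lia
  have hsize : 64 * sieveConstant * (2 * n) * (2 * m + 1) ^ 3 ≤ (2 * (n - m) - 1) ^ 6 := by
    have hk : 2 * n + (2 * m + 1) - 2 * n = 2 * m + 1 := Nat.add_sub_cancel_left ..
    have hT : 2 * (2 * n) - (2 * n + (2 * m + 1)) = 2 * (n - m) - 1 := by lia
    simpa only [hk, hT] using h.le_pow
  rcases Nat.eq_zero_or_pos m with rfl | hm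
  · exact exists_isPrimeLadder_of_hairpin hmn h.prime (.inl rfl)
  obtain ⟨_ | ⟨⟨u, v⟩, L⟩, hL⟩ := ih m hmn
  · exact absurd hL.length_eq hm.ne
  rcases Nat.even_or_odd v with hv | hv
  · have huv : u.Coprime v := hL.rung (u, v) List.mem_cons_self
    have hu : Odd u := (huv.coprime_dvd_right hv.two_dvd).odd_of_right
    exact exists_isPrimeLadder_of_sieve hL.swap hu h.prime hmn hsize
  · exact exists_isPrimeLadder_of_sieve hL hv h.prime hmn hsize

open scoped Nat in
lemma prime_of_coprime_factorial {p B : ℕ} (hp : 1 < p) (hB : p < (B + 1) ^ 2)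
    (h : p.Coprime B !) : p.Prime := by
  by_contra hnp
  have hsq : p.minFac ^ 2 ≤ p := Nat.minFac_sq_le_self (by lia) hnp
  have hlt : p.minFac < B + 1 := lt_of_pow_lt_pow_left' 2 (hsq.trans_lt hB)
  refine (Nat.minFac_prime hp.ne').not_dvd_one ?_
  rw [← h]
  exact Nat.dvd_gcd p.minFac_dvd (Nat.dvd_factorial p.minFac_pos (by lia))

/-- A sufficient test for primality, reliable below `101 ^ 2`, that costs the kernel a few gcds.
Since `p` must exceed `B` to be coprime to `B !`, small primes need small bounds `B`. -/
def primeTest (p : ℕ) : Bool :=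
  [100, 10, 2].any fun B => p.blt ((B + 1) ^ 2) && (p.gcd B.factorial).beq 1

lemma prime_of_primeTest {p : ℕ} (hp : 1 < p) (h : primeTest p) : p.Prime := by
  simp only [primeTest, List.any_eq_true, Bool.and_eq_true, Nat.blt_eq, Nat.beq_eq] at h
  obtain ⟨B, -, hB, hpB⟩ := h
  exact prime_of_coprime_factorial hp hB hpB

/-- The primes `2 * m + 1` tried as sums of the rungs of the inner `m`-ladder, and `1` for the
empty ladder. -/
def hairpinSums : List ℕ :=
  [1, 3, 5, 7, 11, 13, 17, 19, 23, 29, 31, 37, 41, 43, 47, 53, 59, 61, 67, 71, 73, 79, 83, 89, 97,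
    101, 103, 107, 109, 113, 127, 131, 137, 139, 149]

lemma exists_hairpin {n : ℕ} (h0 : 0 < n) (h : n ≤ 4096) :
    ∃ m < n, (2 * n + (2 * m + 1)).Prime ∧ (m = 0 ∨ (2 * m + 1).Prime) := by
  have hsums : ∀ q ∈ hairpinSums, q = 1 ∨ q.Prime ∧ q ≠ 2 := by decide +kernel
  have hsearch : ∀ i < 64, ∀ j < 64, hairpinSums.any fun q =>
      q.blt (2 * (64 * i + j + 1)) && primeTest (2 * (64 * i + j + 1) + q) := by decide +kernel
  have hn : 64 * ((n - 1) / 64) + (n - 1) % 64 + 1 = n := by lia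
  have := hsearch ((n - 1) / 64) (by lia) ((n - 1) % 64) (by lia)
  simp only [hn, List.any_eq_true, Bool.and_eq_true, Nat.blt_eq] at this
  obtain ⟨q, hq, hqn, hp⟩ := this
  have hp := prime_of_primeTest (by lia) hp
  rcases hsums q hq with rfl | ⟨hqp, hq2⟩
  · exact ⟨0, h0, hp, .inl rfl⟩
  · obtain ⟨m, rfl⟩ := hqp.odd_of_ne_two hq2
    exact ⟨m, by lia, hp, .inr hqp⟩

/-- `q` is a folding prime for all sizes in `[p, q)` as soon as it is prime. -/
def IsFoldStep (p q : ℕ) : Prop :=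
  q < 2 * p ∧ 64 * sieveConstant * q * (q - p) ^ 3 ≤ (2 * p - q) ^ 6

instance : DecidableRel IsFoldStep := fun _ _ => inferInstanceAs (Decidable (_ ∧ _))

lemma IsFoldStep.isFoldingPrime {p q x : ℕ} (h : IsFoldStep p q) (hq : q.Prime) (hpx : p ≤ x)
    (hxq : x < q) : IsFoldingPrime x q where
  prime := hq
  lt := hxq
  lt_two_mul := by have := h.1; lia
  le_pow := calc
    64 * sieveConstant * x * (q - x) ^ 3
      ≤ 64 * sieveConstant * q * (q - p) ^ 3 := by gcongr
    _ ≤ (2 * p - q) ^ 6 := h.2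
    _ ≤ (2 * x - q) ^ 6 := by gcongr

lemma exists_isFoldingPrime_of_isChain {a x : ℕ} {L : List ℕ} (hL : (a :: L).IsChain IsFoldStep)
    (hprime : ∀ q ∈ L, q.Prime) (hax : a ≤ x) (hx : ∃ q ∈ L, x < q) :
    ∃ q, IsFoldingPrime x q := by
  induction L generalizing a with
  | nil => simp at hx
  | cons q L ih =>
    rw [List.isChain_cons_cons] at hL
    rw [List.forall_mem_cons] at hprime
    rcases lt_or_ge x q with hxq | hqx
    · exact ⟨q, hL.1.isFoldingPrime hprime.1 hax hxq⟩
    · refine ih hL.2 hprime.2 hqx ?_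
      simpa [not_lt.2 hqx] using hx

/-- `a ^ e` modulo `p` by repeated squaring along the binary digits of `e`. -/
def powMod (p a e : ℕ) : ℕ :=
  (Nat.digits 2 e).foldr (fun b x => a ^ b * x ^ 2 % p) 1

lemma natCast_powMod (p a e : ℕ) : (powMod p a e : ZMod p) = (a : ZMod p) ^ e := by
  have hfold (L : List ℕ) : ((L.foldr (fun b x => a ^ b * x ^ 2 % p) 1 : ℕ) : ZMod p) =
      (a : ZMod p) ^ Nat.ofDigits 2 L := by
    induction L with
    | nil => simp
    | cons b L ih =>
      rw [List.foldr_cons, ZMod.natCast_mod, Nat.cast_mul, Nat.cast_pow, Nat.cast_pow, ih,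
        Nat.ofDigits_cons, pow_add, pow_mul']
  rw [powMod, hfold, Nat.ofDigits_digits]

lemma prime_of_powMod {p a : ℕ} {S : List ℕ} (hS : ∀ q, q.Prime → q ∣ p - 1 → q ∈ S)
    (hone : powMod p a (p - 1) = 1) (hne : ∀ q ∈ S, ¬ powMod p a ((p - 1) / q) ≡ 1 [MOD p]) :
    p.Prime := by
  refine lucas_primality p a ?_ fun q hq hqp h => hne q (hS q hq hqp) ?_
  · rw [← natCast_powMod, hone, Nat.cast_one]
  · rw [← ZMod.natCast_eq_natCast_iff, natCast_powMod, h, Nat.cast_one]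

/-- Primes that form a chain of fold steps from `8192` on, each chosen as large as possible. -/
def smallChain : List ℕ :=
  [8419, 8647, 8893, 9151, 9421, 9697, 9973, 10273, 10601, 10939, 11299, 11681, 12073, 12497, 12941,
    13417, 13921, 14449, 15017, 15619, 16253, 16937, 17669, 18451, 19289, 20183, 21149, 22193,
    23321, 24533, 25849, 27283, 28843, 30557, 32429, 34487, 36761, 39251, 42023, 45121, 48571,
    52457, 56827, 61781, 67421, 73877, 81299, 89899, 99907, 111667, 125551, 142123, 162079, 186317,
    216071, 253013, 299479]

/-- Primes that continue the chain of fold steps after `smallChain`, paired with primitive roots.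
Their predecessors have no prime factor above `5`, which makes them easy to certify. -/
def largeChain : List (ℕ × ℕ) :=
  [(345601, 29), (414721, 13), (506251, 3), (629857, 5), (786433, 10), (995329, 7), (1179649, 19),
    (1492993, 7), (1990657, 5), (2654209, 11), (3750001, 11), (5400001, 22), (7290001, 14),
    (11059201, 7), (16796161, 13), (26214401, 3), (41990401, 11), (65610001, 11), (113246209, 7),
    (189843751, 6), (331776001, 11), (600000001, 11), (1088391169, 11), (2013265921, 31),
    (3796875001, 14), (6912000001, 31), (13183593751, 3), (25312500001, 7), (48372940801, 7),
    (94371840001, 11)]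

lemma prime_of_mem_smallChain : ∀ p ∈ smallChain, p.Prime := by
  norm_num [smallChain]

lemma prime_of_mem_largeChain : ∀ c ∈ largeChain, c.1.Prime := by
  have hcert : ∀ c ∈ largeChain, c.1 - 1 ∣ 30 ^ 36 ∧ powMod c.1 c.2 (c.1 - 1) = 1 ∧
      ∀ q ∈ [2, 3, 5], ¬ powMod c.1 c.2 ((c.1 - 1) / q) ≡ 1 [MOD c.1] := by decide +kernel
  intro c hc
  obtain ⟨hsmooth, hroot⟩ := hcert c hc
  refine prime_of_powMod (fun q hq hqc => ?_) hroot.1 hroot.2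
  have hq30 : q ∣ 2 * 3 * 5 := hq.dvd_of_dvd_pow (hqc.trans hsmooth)
  rw [hq.dvd_mul, hq.dvd_mul, Nat.prime_dvd_prime_iff_eq hq Nat.prime_two,
    Nat.prime_dvd_prime_iff_eq hq Nat.prime_three, Nat.prime_dvd_prime_iff_eq hq Nat.prime_five,
    or_assoc] at hq30
  simpa only [List.mem_cons, List.not_mem_nil, or_false] using hq30

lemma exists_isFoldingPrime_of_lt {x : ℕ} (h : 2 ^ 13 ≤ x) (hx : x < 2 ^ 36) :
    ∃ p, IsFoldingPrime x p := by
  have hchain : (2 ^ 13 :: (smallChain ++ largeChain.map Prod.fst)).IsChain IsFoldStep := by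
    decide +kernel
  refine exists_isFoldingPrime_of_isChain hchain (fun q hq => ?_) h
    ⟨94371840001, by simp [largeChain], by lia⟩
  rcases List.mem_append.1 hq with hq | hq
  · exact prime_of_mem_smallChain q hq
  · obtain ⟨c, hc, rfl⟩ := List.mem_map.1 hq
    exact prime_of_mem_largeChain c hc

section LargePrimes

open Finset

lemma centralBinom_le_two_mul_pow_mul_four_pow {x : ℕ} (hx : 2 < x) :
    x.centralBinom ≤
      (2 * x) ^ ((2 * x).sqrt + #{p ∈ Ioc x (2 * x) | p.Prime}) * 4 ^ (2 * x / 3) := by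
  set f : ℕ → ℕ := fun p => p ^ x.centralBinom.factorization p
  have hprod : x.centralBinom = ∏ p ∈ range (2 * x + 1) with p.Prime, f p := by
    rw [prod_filter_of_ne, x.prod_pow_factorization_centralBinom]
    intro p _ hp
    contrapose hp
    simp only [f, Nat.factorization_eq_zero_of_not_prime _ hp, pow_zero]
  have hf {p : ℕ} (hp : p.Prime) : f p ≤
      (if p ≤ (2 * x).sqrt ∨ x < p then 2 * x else 1) * if p ≤ 2 * x / 3 then p else 1 := by
    split_ifs with hlarge hmid hmid
    · exact (Nat.pow_factorization_choose_le (by lia)).trans (Nat.le_mul_of_pos_right _ hp.pos)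
    · exact (Nat.pow_factorization_choose_le (by lia)).trans_eq (mul_one _).symm
    · rw [one_mul]
      refine (Nat.pow_le_pow_right hp.pos ?_).trans_eq (pow_one p)
      exact Nat.factorization_choose_le_one (Nat.sqrt_lt'.1 (by lia))
    · simp only [f, Nat.factorization_centralBinom_of_two_mul_self_lt_three_mul hx
        (by lia : p ≤ x) (by lia), pow_zero, mul_one, le_refl]
  calc x.centralBinom
    _ ≤ _ := hprod.trans_le (prod_le_prod' fun p hp => hf (mem_filter.1 hp).2)
    _ ≤ _ := by
      rw [prod_mul_distrib, ← prod_filter, ← prod_filter, prod_const, filter_filter, filter_filter]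
      refine Nat.mul_le_mul (Nat.pow_le_pow_right (by lia) ?_) ?_
      · calc _ ≤ #(Icc 1 (2 * x).sqrt ∪ {p ∈ Ioc x (2 * x) | p.Prime}) := by
              refine card_le_card fun p hp => ?_
              simp only [mem_filter, mem_range, mem_union, mem_Icc, mem_Ioc] at hp ⊢
              have := hp.2.1.pos
              grind
          _ ≤ _ := (card_union_le _ _).trans_eq (by rw [Nat.card_Icc, Nat.add_sub_cancel])
      · refine (prod_le_prod_of_subset_of_one_le' (fun p hp => ?_) fun p hp _ => ?_).trans
          (primorial_le_four_pow (2 * x / 3))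
        · simp only [mem_filter, mem_range] at hp ⊢
          exact ⟨by lia, hp.2.1⟩
        · exact (mem_filter.1 hp).2.one_le

lemma card_primes_Ioc_two_mul_le {a b : ℕ} (ha : 0 < a) :
    #{p ∈ Ioc (2 * a) (2 * b) | p.Prime} ≤ b - a := by
  rw [← Nat.card_Ico]
  have hodd {p : ℕ} (hp : p ∈ {p ∈ Ioc (2 * a) (2 * b) | p.Prime}) :
      2 * a < p ∧ p ≤ 2 * b ∧ p = 2 * (p / 2) + 1 := by
    simp only [mem_filter, mem_Ioc] at hp
    have := Nat.odd_iff.1 (hp.2.odd_of_ne_two (by lia))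
    lia
  refine card_le_card_of_injOn (· / 2) (fun p hp => ?_) fun p hp q hq hpq => ?_
  · have := hodd hp
    simp only [coe_Ico, Set.mem_Ico]
    lia
  · have := hodd hp
    have := hodd hq
    simp only at hpq
    lia

lemma exists_prime_le_two_mul_sub {x H : ℕ} (hHx : H < x)
    (hH : H < #{p ∈ Ioc x (2 * x) | p.Prime}) : ∃ p, p.Prime ∧ x < p ∧ p ≤ 2 * (x - H) := by
  contrapose! hH
  calc #{p ∈ Ioc x (2 * x) | p.Prime}
    _ ≤ #{p ∈ Ioc (2 * (x - H)) (2 * x) | p.Prime} := by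
      refine card_le_card fun p hp => ?_
      simp only [mem_filter, mem_Ioc] at hp ⊢
      exact ⟨⟨hH p hp.2 hp.1.1, hp.1.2⟩, hp.2⟩
    _ ≤ x - (x - H) := card_primes_Ioc_two_mul_le (by lia)
    _ = H := Nat.sub_sub_self hHx.le

lemma exists_two_mul_pow_three_le_two_pow {c : ℕ} (hc : 2 ^ 12 ≤ c) :
    ∃ u, 2 * (c + 1) ^ 3 ≤ 2 ^ u ∧ 91 * u ≤ c := by
  set v := Nat.log 2 c
  have hv : 12 ≤ v := Nat.le_log_of_pow_le one_lt_two hc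
  have hcv : c < 2 ^ (v + 1) := Nat.lt_pow_succ_log_self one_lt_two c
  have hexp {v : ℕ} (hv : 12 ≤ v) : 91 * (3 * v + 4) ≤ 2 ^ v := by
    induction v, hv using Nat.le_induction with
    | base => norm_num
    | succ v hv ih => rw [pow_succ]; lia
  refine ⟨3 * v + 4, ?_, (hexp hv).trans (Nat.pow_log_le_self 2 (by lia))⟩
  calc 2 * (c + 1) ^ 3
    _ ≤ 2 * (2 ^ (v + 1)) ^ 3 := by gcongr; exact hcv
    _ = 2 ^ (3 * v + 4) := by ring

lemma two_mul_pow_mul_four_pow_le {x c : ℕ} (hc : 2 ^ 12 ≤ c) (hcx : c ^ 3 ≤ x)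
    (hxc : x < (c + 1) ^ 3) :
    (2 * x) ^ ((2 * x).sqrt + 60 * (c + 1) ^ 2 + 1) * 4 ^ (2 * x / 3) ≤ 4 ^ x := by
  obtain ⟨u, hu, huc⟩ := exists_two_mul_pow_three_le_two_pow hc
  have hsqrt : 10 * ((2 * x).sqrt + 1) ≤ (c + 1) ^ 2 := by
    have hone : 1 ≤ (2 * x).sqrt := Nat.le_sqrt'.2 (by have := Nat.pow_le_pow_left hc 3; lia)
    refine (Nat.pow_le_pow_iff_left two_ne_zero).1 ?_
    calc (10 * ((2 * x).sqrt + 1)) ^ 2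
      _ ≤ (10 * ((2 * x).sqrt + (2 * x).sqrt)) ^ 2 := by gcongr
      _ = 400 * (2 * x).sqrt ^ 2 := by ring
      _ ≤ 400 * (2 * x) := by gcongr; exact Nat.sqrt_le' _
      _ ≤ 800 * (c + 1) ^ 3 := by lia
      _ ≤ (c + 1) * (c + 1) ^ 3 := by gcongr; lia
      _ = ((c + 1) ^ 2) ^ 2 := by ring
  have hexp : u * ((2 * x).sqrt + 60 * (c + 1) ^ 2 + 1) ≤ 2 * x / 3 := by
    have hsq : 2000 * (c + 1) ^ 2 ≤ 2001 * c ^ 2 := by nlinarith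
    rw [Nat.le_div_iff_mul_le three_pos]
    refine le_of_mul_le_mul_left ?_ (by norm_num : 0 < 20000)
    calc 20000 * (u * ((2 * x).sqrt + 60 * (c + 1) ^ 2 + 1) * 3)
      _ ≤ 3 * u * (601 * (2000 * (c + 1) ^ 2)) := by
        rw [show 20000 * (u * ((2 * x).sqrt + 60 * (c + 1) ^ 2 + 1) * 3) =
          3 * u * (2000 * (10 * ((2 * x).sqrt + 60 * (c + 1) ^ 2 + 1))) by ring]
        gcongr 3 * u * ?_
        lia
      _ ≤ 3 * u * (601 * (2001 * c ^ 2)) := by gcongr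
      _ ≤ 40000 * (91 * u * c ^ 2) := by nlinarith
      _ ≤ 40000 * (c * c ^ 2) := by gcongr
      _ ≤ 20000 * (2 * x) := by lia
  calc (2 * x) ^ ((2 * x).sqrt + 60 * (c + 1) ^ 2 + 1) * 4 ^ (2 * x / 3)
    _ ≤ (2 ^ u) ^ ((2 * x).sqrt + 60 * (c + 1) ^ 2 + 1) * (2 ^ 2) ^ (2 * x / 3) := by
      gcongr
      · exact (Nat.mul_le_mul_left 2 hxc.le).trans hu
      · norm_num
    _ = 2 ^ (u * ((2 * x).sqrt + 60 * (c + 1) ^ 2 + 1) + 2 * (2 * x / 3)) := by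
      rw [← pow_mul, ← pow_mul, ← pow_add]
    _ ≤ 2 ^ (2 * x) := Nat.pow_le_pow_right two_pos (by lia)
    _ = 4 ^ x := by rw [pow_mul]; norm_num

lemma sixty_mul_sq_lt_card_primes {x c : ℕ} (hc : 2 ^ 12 ≤ c) (hcx : c ^ 3 ≤ x)
    (hxc : x < (c + 1) ^ 3) : 60 * (c + 1) ^ 2 < #{p ∈ Ioc x (2 * x) | p.Prime} := by
  have hx : 2 ^ 36 ≤ x := (Nat.pow_le_pow_left hc 3).trans hcx
  by_contra! hcard
  refine (Nat.four_pow_lt_mul_centralBinom x (by lia)).not_ge ?_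
  calc x * x.centralBinom
    _ ≤ (2 * x) * ((2 * x) ^ ((2 * x).sqrt + 60 * (c + 1) ^ 2) * 4 ^ (2 * x / 3)) := by
      refine Nat.mul_le_mul (by lia) ((centralBinom_le_two_mul_pow_mul_four_pow (by lia)).trans ?_)
      gcongr
      lia
    _ = (2 * x) ^ ((2 * x).sqrt + 60 * (c + 1) ^ 2 + 1) * 4 ^ (2 * x / 3) := by
      rw [pow_succ' (2 * x), mul_assoc (2 * x)]
    _ ≤ 4 ^ x := two_mul_pow_mul_four_pow_le hc hcx hxc

end LargePrimes

lemma exists_isFoldingPrime_of_le {x : ℕ} (hx : 2 ^ 36 ≤ x) : ∃ p, IsFoldingPrime x p := by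
  set c := Nat.nthRoot 3 x
  have hcx : c ^ 3 ≤ x := Nat.pow_nthRoot_le (.inl three_ne_zero)
  have hxc : x < (c + 1) ^ 3 := Nat.lt_pow_nthRoot_add_one three_ne_zero x
  have hc : 2 ^ 12 ≤ c := (Nat.le_nthRoot_iff three_ne_zero).2 hx
  have hHx : 2 * (60 * (c + 1) ^ 2) < x := by nlinarith
  obtain ⟨p, hp, hxp, hpx⟩ := exists_prime_le_two_mul_sub (by lia)
    (sixty_mul_sq_lt_card_primes hc hcx hxc)
  refine ⟨p, hp, hxp, by lia, ?_⟩
  calc 64 * sieveConstant * x * (p - x) ^ 3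
    _ ≤ 64 * sieveConstant * x * x ^ 3 := by gcongr; lia
    _ = 64 * sieveConstant * x ^ 4 := by ring
    _ ≤ 120 ^ 6 * ((c + 1) ^ 3) ^ 4 := by
      gcongr
      norm_num [sieveConstant]
    _ = (120 * (c + 1) ^ 2) ^ 6 := by ring
    _ ≤ (2 * x - p) ^ 6 := by gcongr; lia

theorem exists_isPrimeLadder (n : ℕ) : ∃ L, IsPrimeLadder n L := by
  induction n using Nat.strong_induction_on with
  | _ n ih =>
    rcases Nat.eq_zero_or_pos n with rfl | hpos
    · exact ⟨[], isPrimeLadder_nil⟩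
    rcases le_or_gt n (2 ^ 12) with hn | hn
    · obtain ⟨m, hmn, hp, hm⟩ := exists_hairpin hpos hn
      exact exists_isPrimeLadder_of_hairpin hmn hp hm
    · obtain ⟨p, hp⟩ : ∃ p, IsFoldingPrime (2 * n) p := by
        rcases lt_or_ge (2 * n) (2 ^ 36) with hlt | hge
        · exact exists_isFoldingPrime_of_lt (by lia) hlt
        · exact exists_isFoldingPrime_of_le hge
      exact hp.exists_isPrimeLadder ih

/-- For every positive integer `n`, the `n`-ladder graph `P_n × P_2` has a prime
labeling: a bijection from its vertices onto `{1, ..., 2n}` such that the labels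
of any two adjacent vertices are relatively prime. -/
theorem ladder_has_prime_labeling (n : ℕ) (hn : 0 < n) :
    ∃ f : Fin n × Fin 2 → ℕ,
      Set.BijOn f Set.univ (Set.Icc 1 (2 * n)) ∧
      ∀ u v : Fin n × Fin 2,
        (pathGraph n □ pathGraph 2).Adj u v → Nat.gcd (f u) (f v) = 1 := by
  obtain ⟨L, hL⟩ := exists_isPrimeLadder n
  exact hL.exists_labeling
end

section
/- For every integer n ≥ 2 there exists a bijection f : {1,...,n} × {1,2} → {1,...,2n} such that for every i with 1 ≤ i ≤ n−1, all four of gcd(f(i,1), f(i,2)), gcd(f(i+1,1), f(i+1,2)), gcd(f(i,1), f(i+1,2)), and gcd(f(i+1,1), f(i,2)) equal 1; that is, the n-ladder has a labeling in which every square fulfils the cross condition. -/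
/-!
Fix an odd prime `p`. The columns `{j, p - j}`, each with its odd label on the first rail, have
coprime labels, and for consecutive `j` the cross condition compares consecutive integers. If
`N + m + 1 = p` is prime with `m < N`, the labels `m + 1, ..., N` thus form a ladder with columns
`{j, p - j}`, and a ladder with labels `1, ..., m` fits between its columns `j` and `j + 1` as soon
as `j` avoids at most two residue classes modulo each odd prime dividing a label at an end of the
inserted ladder. A sieve by one prime at a time finds such a `j` whenever `m ^ 4` is small compared
with a suitable power of `N - m`. Strong induction then only needs a prime not far above `N`:
Chebyshev's method yields one for large `N`, an explicit chain of primes covers the middle range,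
and for small `N` there is a prime `N + q` with `q = 1` or `q` an odd prime, so that the ladder
splits into one part with column sums `q` and one with column sums `N + q`.
-/

namespace CrossLadder

section Labeling

/-- The cross condition between two consecutive columns `c = (f (i, 1), f (i, 2))` and
`d = (f (i + 1, 1), f (i + 1, 2))` of a ladder. The condition on each single column is part of
`IsLabeling`. -/
def Cross (c d : ℕ × ℕ) : Prop :=
  c.1.Coprime d.2 ∧ d.1.Coprime c.2

/-- All labels occurring in a list of columns. -/
def labels (L : List (ℕ × ℕ)) : List ℕ :=
  L.flatMap fun c => [c.1, c.2]

/-- `L` lists the columns of a ladder bijectively labeled by `1, ..., N`, where moreover the odd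
label of each column is the first one; the latter settles all coprimality conditions at the
prime `2`. -/
structure IsLabeling (N : ℕ) (L : List (ℕ × ℕ)) : Prop where
  perm : (labels L).Perm (List.range' 1 N)
  odd : ∀ c ∈ L, Odd c.1
  coprime : ∀ c ∈ L, c.1.Coprime c.2

/-- There is a ladder with labels `1, ..., N`, odd labels on the first rail, all of whose squares
fulfil the cross condition. -/
def HasCrossLabeling (N : ℕ) : Prop :=
  ∃ L, IsLabeling N L ∧ L.IsChain Cross

variable {N : ℕ} {L : List (ℕ × ℕ)}

lemma length_labels (L : List (ℕ × ℕ)) : (labels L).length = 2 * L.length := by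
  simp [labels, List.length_flatMap, mul_comm]

lemma mem_labels {x : ℕ} : x ∈ labels L ↔ ∃ c ∈ L, x = c.1 ∨ x = c.2 := by
  simp [labels]

lemma IsLabeling.mem_labels_iff (h : IsLabeling N L) {x : ℕ} : x ∈ labels L ↔ 1 ≤ x ∧ x ≤ N := by
  rw [h.perm.mem_iff, List.mem_range'_1]
  omega

lemma IsLabeling.two_mul_length (h : IsLabeling N L) : 2 * L.length = N := by
  rw [← length_labels, h.perm.length_eq, List.length_range']

lemma HasCrossLabeling.exists_bijOn {n : ℕ} (h : HasCrossLabeling (2 * n)) :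
    ∃ f : ℕ × ℕ → ℕ,
      Set.BijOn f ((Set.Icc 1 n) ×ˢ (Set.Icc 1 2)) (Set.Icc 1 (2 * n)) ∧
      (∀ i ∈ Set.Icc 1 n, (f (i, 1)).Coprime (f (i, 2))) ∧
      ∀ i, 1 ≤ i → i < n → Cross (f (i, 1), f (i, 2)) (f (i + 1, 1), f (i + 1, 2)) := by
  obtain ⟨L, hL, hchain⟩ := h
  have hlen : L.length = n := by have := hL.two_mul_length; omega
  let f : ℕ × ℕ → ℕ := fun x =>
    if x.2 = 1 then (L.getD (x.1 - 1) 0).1 else (L.getD (x.1 - 1) 0).2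
  have hf : ∀ i (hi : i < L.length), (f (i + 1, 1), f (i + 1, 2)) = L[i] := fun i hi => by
    simp [f, hi]
  have hmem : ∀ i ∈ Set.Icc 1 n, (f (i, 1), f (i, 2)) ∈ L := fun i ⟨h1, h2⟩ => by
    rw [← Nat.sub_add_cancel h1, hf (i - 1) (by omega)]
    exact List.getElem_mem _
  have hmaps : Set.MapsTo f (Set.Icc 1 n ×ˢ Set.Icc 1 2) (Set.Icc 1 (2 * n)) := by
    rintro ⟨i, e⟩ ⟨hi, he⟩
    obtain rfl | rfl : e = 1 ∨ e = 2 := by simp only [Set.mem_Icc] at he; omega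
    · exact hL.mem_labels_iff.1 (mem_labels.2 ⟨_, hmem i hi, .inl rfl⟩)
    · exact hL.mem_labels_iff.1 (mem_labels.2 ⟨_, hmem i hi, .inr rfl⟩)
  have hsurj : Set.SurjOn f (Set.Icc 1 n ×ˢ Set.Icc 1 2) (Set.Icc 1 (2 * n)) := by
    intro x hx
    obtain ⟨c, hc, hxc⟩ := mem_labels.1 (hL.mem_labels_iff.2 hx)
    obtain ⟨i, hi, rfl⟩ := List.getElem_of_mem hc
    rw [← hf i hi] at hxc
    rcases hxc with rfl | rfl
    · exact ⟨(i + 1, 1), by simp; omega, rfl⟩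
    · exact ⟨(i + 1, 2), by simp; omega, rfl⟩
  refine ⟨f, ⟨hmaps, ?_, hsurj⟩, fun i hi => hL.coprime _ (hmem i hi), fun i h1 h2 => ?_⟩
  · have : Set.SurjOn f ((Finset.Icc 1 n ×ˢ Finset.Icc 1 2 : Finset (ℕ × ℕ)) : Set (ℕ × ℕ))
        (Finset.Icc 1 (2 * n)) := by simpa using hsurj
    simpa using Finset.injOn_of_surjOn_of_card_le f (by simpa using hmaps) this (by simp [mul_comm])
  · obtain ⟨j, rfl⟩ := Nat.exists_eq_add_of_le' h1
    rw [hf j (by omega), hf (j + 1) (by omega)]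
    exact List.isChain_iff_getElem.1 hchain j (by omega)

end Labeling

section Zigzag

open scoped List

/-- The column with labels `j` and `p - j`, the odd one first. -/
def foldColumn (p j : ℕ) : ℕ × ℕ :=
  if Odd j then (j, p - j) else (p - j, j)

lemma foldColumn_of_odd (p : ℕ) {j : ℕ} (hj : Odd j) : foldColumn p j = (j, p - j) :=
  if_pos hj

lemma foldColumn_succ_of_odd (p : ℕ) {j : ℕ} (hj : Odd j) :
    foldColumn p (j + 1) = (p - (j + 1), j + 1) :=
  if_neg (by simpa using hj.add_one)

lemma odd_foldColumn_fst {p j : ℕ} (hp : Odd p) (hj : j ≤ p) : Odd (foldColumn p j).1 := by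
  unfold foldColumn
  split_ifs with h
  · exact h
  · exact Nat.Odd.sub_even hj hp (Nat.not_odd_iff_even.1 h)

lemma coprime_foldColumn {p j : ℕ} (hp : p.Prime) (hj : 0 < j) (hjp : j < p) :
    (foldColumn p j).1.Coprime (foldColumn p j).2 := by
  have hcop : j.Coprime (p - j) :=
    (Nat.coprime_sub_self_right hjp.le).2 (Nat.coprime_of_lt_prime hj.ne' hjp hp).symm
  unfold foldColumn
  split_ifs
  · exact hcop
  · exact hcop.symm

lemma cross_foldColumn_succ {p j : ℕ} (hj : j < p) :
    Cross (foldColumn p j) (foldColumn p (j + 1)) := by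
  have hsub : p - j = p - (j + 1) + 1 := by omega
  rcases Nat.even_or_odd j with h | h
  · rw [foldColumn, foldColumn, if_neg (Nat.not_odd_iff_even.2 h), if_pos h.add_one, hsub]
    exact ⟨by simp, by simp⟩
  · rw [foldColumn_of_odd p h, foldColumn_succ_of_odd p h, hsub]
    exact ⟨by simp, by simp⟩

lemma Cross.symm {c d : ℕ × ℕ} (h : Cross c d) : Cross d c :=
  ⟨h.2, h.1⟩

lemma isChain_cross_map_foldColumn {p a k : ℕ} (h : a + k ≤ p) :
    ((List.range' a k).map (foldColumn p)).IsChain Cross := by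
  refine List.isChain_iff_getElem.2 fun i hi => ?_
  rw [List.length_map, List.length_range'] at hi
  simpa [add_assoc] using cross_foldColumn_succ (show a + i < p by omega)

lemma labels_map_foldColumn_perm (m k : ℕ) :
    labels ((List.range' (m + 1) k).map (foldColumn (2 * (m + k) + 1))) ~
      List.range' (m + 1) (2 * k) := by
  induction k generalizing m with
  | zero => rfl
  | succ k ih =>
    have hcol : labels [foldColumn (2 * (m + (k + 1)) + 1) (m + 1)] ~
        [m + 1, m + 1 + 1 + 2 * k] := by
      have : 2 * (m + (k + 1)) + 1 - (m + 1) = m + 1 + 1 + 2 * k := by omega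
      rw [foldColumn, this]
      split_ifs
      · rfl
      · exact .swap ..
    have ih' := ih (m + 1)
    rw [add_right_comm m 1 k] at ih'
    calc labels ((List.range' (m + 1) (k + 1)).map (foldColumn (2 * (m + (k + 1)) + 1)))
        = labels [foldColumn (2 * (m + (k + 1)) + 1) (m + 1)] ++
            labels ((List.range' (m + 1 + 1) k).map (foldColumn (2 * (m + k + 1) + 1))) := by
          simp [labels, List.range'_succ, add_assoc]
      _ ~ [m + 1, m + 1 + 1 + 2 * k] ++ List.range' (m + 1 + 1) (2 * k) := hcol.append ih'
      _ ~ (m + 1) :: (List.range' (m + 1 + 1) (2 * k) ++ [m + 1 + 1 + 2 * k]) :=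
          .cons _ List.perm_append_comm
      _ = List.range' (m + 1) (2 * (k + 1)) := by
          rw [← List.range'_1_concat, ← List.range'_succ, mul_add_one]

lemma IsLabeling.of_perm_append {m k : ℕ} {L L' : List (ℕ × ℕ)} (hL : IsLabeling m L)
    (hp : (2 * (m + k) + 1).Prime)
    (h : L' ~ L ++ (List.range' (m + 1) k).map (foldColumn (2 * (m + k) + 1))) :
    IsLabeling (m + 2 * k) L' where
  perm := by
    refine (h.flatMap_right _).trans ?_
    rw [List.flatMap_append, ← List.range'_append_1, add_comm 1 m]
    exact hL.perm.append (labels_map_foldColumn_perm m k)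
  odd c hc := by
    rcases List.mem_append.1 (h.mem_iff.1 hc) with hc | hc
    · exact hL.odd c hc
    · obtain ⟨j, hj, rfl⟩ := List.mem_map.1 hc
      rw [List.mem_range'_1] at hj
      exact odd_foldColumn_fst (odd_two_mul_add_one _) (by omega)
  coprime c hc := by
    rcases List.mem_append.1 (h.mem_iff.1 hc) with hc | hc
    · exact hL.coprime c hc
    · obtain ⟨j, hj, rfl⟩ := List.mem_map.1 hc
      rw [List.mem_range'_1] at hj
      exact coprime_foldColumn hp (by omega) (by omega)

lemma isLabeling_zero : IsLabeling 0 [] :=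
  ⟨.nil, by simp, by simp⟩

lemma hasCrossLabeling_of_prime_add {N q : ℕ} (hN : Even N) (hq : q = 1 ∨ q.Prime ∧ Odd q)
    (hqN : q ≤ N + 1) (hp : (N + q).Prime) : HasCrossLabeling N := by
  -- The labels below `q` are paired to columns with sum `q`, the remaining ones with sum `N + q`.
  have hqodd : Odd q := by rcases hq with rfl | hq; exacts [odd_one, hq.2]
  obtain ⟨a, rfl⟩ := hqodd
  obtain ⟨k, rfl⟩ : ∃ k, N = 2 * a + 2 * k := ⟨(N - 2 * a) / 2, by grind⟩
  rw [show 2 * a + 2 * k + (2 * a + 1) = 2 * (2 * a + k) + 1 by ring] at hp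
  have hinner : IsLabeling (2 * a) ((List.range' 1 a).map (foldColumn (2 * a + 1))).reverse := by
    rcases hq with h | h
    · obtain rfl : a = 0 := by omega
      exact isLabeling_zero
    · simpa using isLabeling_zero.of_perm_append (k := a) (by simpa using h.1)
        (by simp)
  refine ⟨_, hinner.of_perm_append hp (.refl _), List.isChain_append.2 ⟨?_, ?_, ?_⟩⟩
  · exact List.isChain_reverse.2
      ((isChain_cross_map_foldColumn (by omega)).imp fun _ _ => Cross.symm)
  · exact isChain_cross_map_foldColumn (by omega)
  · rintro c hc d hd
    rw [List.getLast?_reverse, List.head?_map, List.head?_range'] at hc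
    rw [List.head?_map, List.head?_range'] at hd
    split_ifs at hc hd <;>
      simp only [Option.map_none, Option.map_some, Option.mem_def, Option.some.injEq,
        reduceCtorEq] at hc hd
    subst hc hd
    rw [foldColumn_of_odd _ odd_one, foldColumn_of_odd _ (odd_two_mul_add_one a)]
    exact ⟨by simp, by simp⟩

lemma IsLabeling.hasCrossLabeling_insert {m h j : ℕ} {L : List (ℕ × ℕ)} (hL : IsLabeling m L)
    (hchain : L.IsChain Cross) (hne : L ≠ []) (hp : (2 * (m + h) + 1).Prime) (hj : m + 1 ≤ j)
    (hjh : j + 1 ≤ m + h) (hhead : Cross (foldColumn (2 * (m + h) + 1) j) (L.head hne))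
    (hlast : Cross (L.getLast hne) (foldColumn (2 * (m + h) + 1) (j + 1))) :
    HasCrossLabeling (m + 2 * h) := by
  obtain ⟨a, rfl⟩ := Nat.exists_eq_add_of_le hj
  obtain ⟨b, rfl⟩ : ∃ b, h = a + 1 + b := ⟨h - (a + 1), by omega⟩
  set p := 2 * (m + (a + 1 + b)) + 1
  have hsplit : List.range' (m + 1) (a + 1 + b) =
      List.range' (m + 1) (a + 1) ++ List.range' (m + 1 + (a + 1)) b :=
    List.range'_append_1.symm
  refine ⟨(List.range' (m + 1) (a + 1)).map (foldColumn p) ++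
    (L ++ (List.range' (m + 1 + (a + 1)) b).map (foldColumn p)), hL.of_perm_append hp ?_, ?_⟩
  · rw [hsplit, List.map_append, ← List.append_assoc, ← List.append_assoc]
    exact List.perm_append_comm.append_right _
  · rw [List.isChain_append, List.isChain_append]
    refine ⟨isChain_cross_map_foldColumn (by omega), ⟨hchain,
      isChain_cross_map_foldColumn (by omega), ?_⟩, ?_⟩
    · intro d hd e he
      rw [List.getLast?_eq_some_getLast hne] at hd
      rw [List.head?_map, List.head?_range'] at he
      split_ifs at he <;>
        simp only [Option.map_none, Option.map_some, Option.mem_def, Option.some.injEq,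
          reduceCtorEq] at hd he
      subst hd he
      exact hlast
    · intro e he c hc
      rw [List.head?_append_of_ne_nil _ hne, List.head?_eq_some_head hne] at hc
      rw [List.getLast?_map, List.getLast?_range'] at he
      simp only [Option.mem_def, Option.some.injEq, Nat.add_eq_zero_iff, one_ne_zero, and_false,
        ↓reduceIte, Nat.add_succ_sub_one, Option.map_some] at hc he
      subst hc he
      exact hhead

end Zigzag

section Sieve

open Finset

variable {S : Finset ℕ} {A : ∀ l : ℕ, Finset (ZMod l)}

/-- The indices `u < K` of the terms of the arithmetic progression `r, r + d, r + 2 * d, ...` whose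
residue modulo `l` avoids `A l`, for all `l ∈ S`. -/
def sifted (S : Finset ℕ) (A : ∀ l : ℕ, Finset (ZMod l)) (r d K : ℕ) : Finset ℕ :=
  {u ∈ range K | ∀ l ∈ S, ((r + d * u : ℕ) : ZMod l) ∉ A l}

lemma card_sifted_filter_eq {l c r d K : ℕ} {a : ZMod l} (hc : c < l) (hd : d.Coprime l)
    (hca : ((r + d * c : ℕ) : ZMod l) = a) :
    #{u ∈ sifted S A r d K | ((r + d * u : ℕ) : ZMod l) = a} =
      #(sifted S A (r + d * c) (d * l) ((K + (l - 1 - c)) / l)) := by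
  have hl : 0 < l := by omega
  have hlt : ∀ v, c + l * v < K ↔ v < (K + (l - 1 - c)) / l := fun v => by
    rw [Nat.lt_iff_add_one_le, Nat.lt_iff_add_one_le, Nat.le_div_iff_mul_le hl, add_one_mul,
      mul_comm v l]
    omega
  symm
  refine card_bij (fun v _ => c + l * v) (fun v hv => ?_) (fun v _ w _ h => ?_) fun u hu => ?_
  · simp only [sifted, mem_filter, mem_range] at hv ⊢
    refine ⟨⟨(hlt v).2 hv.1, fun l' hl' => ?_⟩, ?_⟩
    · rw [mul_add, ← mul_assoc, ← add_assoc]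
      exact hv.2 l' hl'
    · rw [← hca]
      simp
  · exact Nat.eq_of_mul_eq_mul_left hl (Nat.add_left_cancel h)
  · simp only [sifted, mem_filter, mem_range] at hu
    obtain ⟨⟨huK, hu⟩, hua⟩ := hu
    have hmod : u % l = c := by
      rw [← hca, ZMod.natCast_eq_natCast_iff] at hua
      have := (Nat.ModEq.cancel_left_of_coprime hd.symm (Nat.ModEq.add_left_cancel' r hua))
      rwa [Nat.ModEq, Nat.mod_eq_of_lt hc] at this
    have hu' : c + l * (u / l) = u := by rw [← hmod, Nat.mod_add_div]
    refine ⟨u / l, ?_, hu'⟩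
    simp only [sifted, mem_filter, mem_range]
    refine ⟨(hlt _).1 (hu'.symm ▸ huK), fun l' hl' => ?_⟩
    rw [add_assoc, mul_assoc, ← mul_add, hu']
    exact hu l' hl'

lemma exists_lt_natCast_add_mul_eq {l : ℕ} (hl : l.Prime) {d : ℕ} (hd : d.Coprime l) (r : ℕ)
    (a : ZMod l) : ∃ c < l, ((r + d * c : ℕ) : ZMod l) = a := by
  have := Fact.mk hl
  refine ⟨((a - r) * (d : ZMod l)⁻¹).val, ZMod.val_lt _, ?_⟩
  rw [Nat.cast_add, Nat.cast_mul, ZMod.natCast_zmod_val, mul_left_comm,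
    ZMod.coe_mul_inv_eq_one d hd, mul_one, add_sub_cancel]

lemma abs_natCast_add_div_sub_le {l c : ℕ} (hc : c < l) (K : ℕ) :
    |(((K + (l - 1 - c)) / l : ℕ) : ℚ) - K / l| ≤ 1 := by
  have hl : (0 : ℚ) < l := by exact_mod_cast (show 0 < l by omega)
  have hlow := Nat.div_mul_le_self (K + (l - 1 - c)) l
  have hup := Nat.lt_div_mul_add (a := K + (l - 1 - c)) (b := l) (by omega)
  generalize (K + (l - 1 - c)) / l = q at *
  have h1 : (q * l : ℚ) ≤ K + l := by exact_mod_cast (show q * l ≤ K + l by omega)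
  have h2 : (K : ℚ) ≤ q * l + l := by exact_mod_cast (show K ≤ q * l + l by omega)
  rw [sub_div' hl.ne', abs_div, abs_of_pos hl, div_le_one hl, abs_le]
  constructor <;> linarith

lemma abs_card_sifted_filter_sub_le {l r d K : ℕ} {P E : ℚ} (hP0 : 0 ≤ P) (hP1 : P ≤ 1)
    (hE : ∀ r' K' : ℕ, |#(sifted S A r' (d * l) K') - K' * P| ≤ E) (hl : l.Prime)
    (hd : d.Coprime l) (a : ZMod l) :
    |#{u ∈ sifted S A r d K | ((r + d * u : ℕ) : ZMod l) = a} - K / l * P| ≤ E + 1 := by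
  obtain ⟨c, hc, hca⟩ := exists_lt_natCast_add_mul_eq hl hd r a
  rw [card_sifted_filter_eq hc hd hca]
  set K' := (K + (l - 1 - c)) / l
  have hK' : |(K' - K / l : ℚ) * P| ≤ 1 := by
    rw [abs_mul, abs_of_nonneg hP0]
    exact mul_le_one₀ (abs_natCast_add_div_sub_le hc K) hP0 hP1
  calc |#(sifted S A (r + d * c) (d * l) K') - K / l * P|
      ≤ |#(sifted S A (r + d * c) (d * l) K') - K' * P| + |K' * P - K / l * P| :=
        abs_sub_le _ _ _
    _ ≤ E + 1 := add_le_add (hE _ _) (by rwa [← sub_mul])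

lemma card_sifted_insert_add (S : Finset ℕ) (A : ∀ l : ℕ, Finset (ZMod l)) (l r d K : ℕ) :
    #(sifted (insert l S) A r d K) +
      ∑ a ∈ A l, #{u ∈ sifted S A r d K | ((r + d * u : ℕ) : ZMod l) = a} =
        #(sifted S A r d K) := by
  rw [sum_card_fiberwise_eq_card_filter, add_comm,
    ← card_filter_add_card_filter_not (s := sifted S A r d K)
      fun u => ((r + d * u : ℕ) : ZMod l) ∈ A l]
  congr 2
  ext u
  simp only [sifted, mem_filter, forall_mem_insert]
  tauto

lemma card_div_le_one {l : ℕ} (hl : l ≠ 0) (B : Finset (ZMod l)) : (#B / l : ℚ) ≤ 1 := by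
  have := NeZero.mk hl
  refine div_le_one_of_le₀ (Nat.cast_le.2 ?_) l.cast_nonneg
  exact (card_le_univ B).trans_eq (ZMod.card l)

lemma abs_card_sifted_sub_le (hS : ∀ l ∈ S, l.Prime) (r K : ℕ) {d : ℕ}
    (hd : ∀ l ∈ S, d.Coprime l) :
    |#(sifted S A r d K) - K * ∏ l ∈ S, (1 - #(A l) / l : ℚ)| ≤
      ∏ l ∈ S, (1 + #(A l) : ℚ) - 1 := by
  induction S using Finset.induction_on generalizing r d K with
  | empty => simp [sifted]
  | insert l S hlS ih =>
    rw [forall_mem_insert] at hS hd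
    set P := ∏ l ∈ S, (1 - #(A l) / l : ℚ)
    set E := ∏ l ∈ S, (1 + #(A l) : ℚ)
    have hfactor : ∀ l' ∈ S, (0 : ℚ) ≤ 1 - #(A l') / l' := fun l' hl' =>
      sub_nonneg.2 (card_div_le_one (hS.2 l' hl').ne_zero _)
    have hP0 : 0 ≤ P := prod_nonneg hfactor
    have hP1 : P ≤ 1 := prod_le_one hfactor fun l' _ => sub_le_self _ (by positivity)
    have hdl : ∀ l' ∈ S, (d * l).Coprime l' := fun l' hl' =>
      (hd.2 l' hl').mul_left ((Nat.coprime_primes hS.1 (hS.2 l' hl')).2 fun h => hlS (h ▸ hl'))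
    have hfiber : ∀ a ∈ A l,
        |#{u ∈ sifted S A r d K | ((r + d * u : ℕ) : ZMod l) = a} - K / l * P| ≤ E := by
      intro a _
      simpa using abs_card_sifted_filter_sub_le hP0 hP1 (fun r' K' => ih hS.2 r' K' hdl) hS.1 hd.1 a
    have hsum := (abs_sum_le_sum_abs _ _).trans (sum_le_card_nsmul (A l) _ _ hfiber)
    rw [sum_sub_distrib, sum_const, nsmul_eq_mul, nsmul_eq_mul] at hsum
    have hinsert := congrArg (Nat.cast (R := ℚ)) (card_sifted_insert_add S A l r d K)
    rw [Nat.cast_add, Nat.cast_sum] at hinsert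
    rw [prod_insert hlS, prod_insert hlS]
    calc |#(sifted (insert l S) A r d K) - K * ((1 - #(A l) / l : ℚ) * P)|
        = |(#(sifted S A r d K) - K * P) -
            (∑ a ∈ A l, (#{u ∈ sifted S A r d K | ((r + d * u : ℕ) : ZMod l) = a} : ℚ) -
              #(A l) * (K / l * P))| := by
          rw [← hinsert]
          ring_nf
      _ ≤ (E - 1) + #(A l) * E := (abs_sub _ _).trans (add_le_add (ih hS.2 r K hd.2) hsum)
      _ = (1 + #(A l)) * E - 1 := by ring

lemma exists_avoiding (hS : ∀ l ∈ S, l.Prime) (hA : ∀ l ∈ S, #(A l) < l) (r : ℕ) {d K : ℕ}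
    (hd : ∀ l ∈ S, d.Coprime l)
    (hK : ∏ l ∈ S, ((1 + #(A l)) * l / (l - #(A l)) : ℚ) ≤ K) :
    ∃ u < K, ∀ l ∈ S, ((r + d * u : ℕ) : ZMod l) ∉ A l := by
  have hpos : ∀ l ∈ S, (0 : ℚ) < 1 - #(A l) / l := fun l hl => by
    have hl0 : (0 : ℚ) < l := mod_cast (hS l hl).pos
    exact sub_pos.2 ((div_lt_one hl0).2 (mod_cast hA l hl))
  have hmain : ∏ l ∈ S, (1 + #(A l) : ℚ) ≤ K * ∏ l ∈ S, (1 - #(A l) / l : ℚ) := by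
    rw [← div_le_iff₀ (prod_pos hpos), ← prod_div_distrib]
    refine hK.trans_eq' (prod_congr rfl fun l hl => ?_)
    have hl0 : (l : ℚ) ≠ 0 := mod_cast (hS l hl).ne_zero
    rw [one_sub_div hl0, div_div_eq_mul_div]
  have hcard := (abs_le.1 (abs_card_sifted_sub_le (A := A) hS r K hd)).1
  have : (0 : ℚ) < #(sifted S A r d K) := by linarith
  obtain ⟨u, hu⟩ := card_pos.1 (Nat.cast_pos.1 this)
  simp only [sifted, mem_filter, mem_range] at hu
  exact ⟨u, hu⟩

/-- The largest value, for `n ≤ 2` forbidden residue classes modulo the prime `l`, of the factor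
`((1 + n) * l / (l - n)) ^ k` which `l` contributes to the `k`-th power of the sieve bound, divided
by `l ^ n`. Dividing by `l ^ n` compares the bound with the number whose prime factors are sieved
out. -/
def localFactor (k l : ℕ) : ℚ :=
  max 1 (max ((2 * l / (l - 1)) ^ k / l) ((3 * l / (l - 2)) ^ k / l ^ 2))

/-- The product of the local factors of the primes `l` with `5 ≤ l < y`. -/
def sieveConstant (k y : ℕ) : ℚ :=
  ∏ l ∈ (Ico 5 y).filter Nat.Prime, localFactor k l

lemma one_le_localFactor (k l : ℕ) : 1 ≤ localFactor k l :=
  le_max_left _ _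

lemma sieveConstant_nonneg (k y : ℕ) : 0 ≤ sieveConstant k y :=
  prod_nonneg fun l _ => zero_le_one.trans (one_le_localFactor k l)

lemma localFactor_anti (k : ℕ) {l l' : ℕ} (hl : 3 ≤ l) (h : l ≤ l') :
    localFactor k l' ≤ localFactor k l := by
  have hl3 : (3 : ℚ) ≤ l := mod_cast hl
  have hll : (l : ℚ) ≤ l' := mod_cast h
  have : (3 : ℚ) ≤ l' := hl3.trans hll
  have h1 : (2 * l' / (l' - 1) : ℚ) ≤ 2 * l / (l - 1) := by
    rw [div_le_div_iff₀ (by linarith) (by linarith)]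
    nlinarith
  have h2 : (3 * l' / (l' - 2) : ℚ) ≤ 3 * l / (l - 2) := by
    rw [div_le_div_iff₀ (by linarith) (by linarith)]
    nlinarith
  have h1' : (0 : ℚ) ≤ 2 * l' / (l' - 1) := div_nonneg (by linarith) (by linarith)
  have h2' : (0 : ℚ) ≤ 3 * l' / (l' - 2) := div_nonneg (by linarith) (by linarith)
  exact max_le_max le_rfl (max_le_max
    (div_le_div₀ (pow_nonneg (h1'.trans h1) k) (pow_le_pow_left₀ h1' h1 k) (by linarith) hll)
    (div_le_div₀ (pow_nonneg (h2'.trans h2) k) (pow_le_pow_left₀ h2' h2 k) (by positivity)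
      (by gcongr)))

lemma pow_le_localFactor_mul {k l n : ℕ} (hl : 3 ≤ l) (hn : n ≤ 2) :
    ((1 + n) * l / (l - n) : ℚ) ^ k ≤ localFactor k l * l ^ n := by
  have hl0 : (0 : ℚ) < l := by exact_mod_cast (show 0 < l by omega)
  rw [← div_le_iff₀ (by positivity), localFactor]
  interval_cases n
  · simp [hl0.ne']
  · norm_num
  · norm_num

lemma prod_pow_le_sieveConstant_mul {k y : ℕ} (hy3 : 3 ≤ y) (hy : localFactor k y ≤ 1) {n : ℕ → ℕ}
    (hS : ∀ l ∈ S, l.Prime ∧ 5 ≤ l) (hn : ∀ l ∈ S, n l ≤ 2) :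
    (∏ l ∈ S, ((1 + n l) * l / (l - n l) : ℚ)) ^ k ≤
      sieveConstant k y * ∏ l ∈ S, (l : ℚ) ^ n l := by
  have hS' : ∏ l ∈ S, localFactor k l ≤ sieveConstant k y := by
    calc ∏ l ∈ S, localFactor k l ≤ ∏ l ∈ S with l < y, localFactor k l := by
          rw [prod_filter]
          refine prod_le_prod (fun l _ => zero_le_one.trans (one_le_localFactor k l)) fun l _ => ?_
          split_ifs with h
          · rfl
          · exact (localFactor_anti k hy3 (not_lt.1 h)).trans hy
      _ ≤ sieveConstant k y :=
        prod_mono_set_of_one_le (one_le_localFactor k) fun l hl => by grind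
  have hpos : ∀ l ∈ S, (0 : ℚ) ≤ (1 + n l) * l / (l - n l) := fun l hl =>
    have hnl : n l ≤ l := (hn l hl).trans ((hS l hl).2.trans' (by norm_num))
    div_nonneg (by positivity) (sub_nonneg.2 (mod_cast hnl))
  calc (∏ l ∈ S, ((1 + n l) * l / (l - n l) : ℚ)) ^ k
      ≤ ∏ l ∈ S, localFactor k l * (l : ℚ) ^ n l := by
        rw [← prod_pow]
        exact prod_le_prod (fun l hl => pow_nonneg (hpos l hl) k) fun l hl =>
          pow_le_localFactor_mul ((hS l hl).2.trans' (by omega)) (hn l hl)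
    _ ≤ sieveConstant k y * ∏ l ∈ S, (l : ℚ) ^ n l := by
        rw [prod_mul_distrib]
        gcongr

lemma prod_pow_le_mul {a b : ℕ} {n : ℕ → ℕ} (ha : a ≠ 0) (hb : b ≠ 0) (hS : ∀ l ∈ S, l.Prime)
    (hn : ∀ l ∈ S, n l ≤ (if l ∣ a then 1 else 0) + if l ∣ b then 1 else 0) :
    ∏ l ∈ S, l ^ n l ≤ a * b := by
  have hprod : ∀ c ≠ 0, ∏ l ∈ S, l ^ (if l ∣ c then 1 else 0) ≤ c := fun c hc => by
    simp only [pow_ite, pow_one, pow_zero, ← prod_filter]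
    refine Nat.le_of_dvd hc.pos ((prod_dvd_prod_of_subset _ _ _ fun l hl => ?_).trans
      (Nat.prod_primeFactors_dvd c))
    rw [mem_filter] at hl
    exact Nat.mem_primeFactors.2 ⟨hS l hl.1, hl.2, hc⟩
  calc ∏ l ∈ S, l ^ n l
      ≤ ∏ l ∈ S, (l ^ (if l ∣ a then 1 else 0) * l ^ (if l ∣ b then 1 else 0)) := by
        simp only [← pow_add]
        exact prod_le_prod' fun l hl => Nat.pow_le_pow_right (hS l hl).pos (hn l hl)
    _ ≤ a * b := by
        rw [prod_mul_distrib]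
        exact Nat.mul_le_mul (hprod a ha) (hprod b hb)

lemma coprime_six_of_five_le {l : ℕ} (hl : l.Prime) (h5 : 5 ≤ l) : Nat.Coprime 6 l :=
  Nat.Coprime.mul_left (m := 2) (n := 3) ((Nat.coprime_primes Nat.prime_two hl).2 (by omega))
    ((Nat.coprime_primes Nat.prime_three hl).2 (by omega))

lemma prod_le_of_sieveConstant_mul_le {k y a b K : ℕ} {n : ℕ → ℕ} (ha : a ≠ 0) (hb : b ≠ 0)
    (hk : k ≠ 0) (hy3 : 3 ≤ y) (hy : localFactor k y ≤ 1) (hS : ∀ l ∈ S, l.Prime ∧ 5 ≤ l)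
    (hn : ∀ l ∈ S, n l ≤ (if l ∣ a then 1 else 0) + if l ∣ b then 1 else 0)
    (hK : sieveConstant k y * (a * b : ℕ) ≤ K ^ k) :
    ∏ l ∈ S, ((1 + n l) * l / (l - n l) : ℚ) ≤ K := by
  have hn2 : ∀ l ∈ S, n l ≤ 2 := fun l hl => (hn l hl).trans (by split_ifs <;> simp)
  refine le_of_pow_le_pow_left₀ hk K.cast_nonneg ?_
  refine (prod_pow_le_sieveConstant_mul hy3 hy hS hn2).trans (hK.trans' ?_)
  refine mul_le_mul_of_nonneg_left ?_ (sieveConstant_nonneg k y)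
  exact_mod_cast prod_pow_le_mul ha hb (fun l hl => (hS l hl).1) hn

lemma exists_lt_three_ne (m : ℕ) (v w : ZMod 3) :
    ∃ s < 3, ((m + 1 + 2 * s : ℕ) : ZMod 3) ≠ v ∧ ((m + 1 + 2 * s : ℕ) : ZMod 3) ≠ w := by
  push_cast
  exact (by decide : ∀ x v w : ZMod 3, ∃ s < 3, x + 1 + 2 * (s : ℕ) ≠ v ∧
    x + 1 + 2 * (s : ℕ) ≠ w) m v w

lemma exists_odd_avoiding {m K k y a b : ℕ} (hm : Even m) (ha : a ≠ 0) (hb : b ≠ 0) (hk : k ≠ 0)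
    (hy3 : 3 ≤ y) (hy : localFactor k y ≤ 1) (hK : sieveConstant k y * (a * b : ℕ) ≤ K ^ k)
    (α β : ∀ l : ℕ, ZMod l) :
    ∃ j, Odd j ∧ m < j ∧ j < m + 6 * K ∧
      ∀ l, l.Prime → l ≠ 2 → (l ∣ a → (j : ZMod l) ≠ α l) ∧ (l ∣ b → (j : ZMod l) ≠ β l) := by
  -- Modulo `3`, two forbidden classes are too many for the sieve; the starting point avoids them.
  obtain ⟨s, hs, hs3⟩ := exists_lt_three_ne m (α 3) (β 3)
  set S := {l ∈ (a * b).primeFactors | 5 ≤ l}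
  have hS : ∀ l ∈ S, l.Prime ∧ 5 ≤ l := fun l hl =>
    ⟨Nat.prime_of_mem_primeFactors (mem_filter.1 hl).1, (mem_filter.1 hl).2⟩
  let A : ∀ l : ℕ, Finset (ZMod l) := fun l =>
    (if l ∣ a then {α l} else ∅) ∪ (if l ∣ b then {β l} else ∅)
  have hA : ∀ l, #(A l) ≤ (if l ∣ a then 1 else 0) + if l ∣ b then 1 else 0 := fun l =>
    (card_union_le _ _).trans (add_le_add (by split_ifs <;> simp) (by split_ifs <;> simp))
  have hA2 : ∀ l, #(A l) ≤ 2 := fun l => (hA l).trans (by split_ifs <;> simp)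
  obtain ⟨u, hu, havoid⟩ := exists_avoiding (fun l hl => (hS l hl).1)
    (fun l hl => (hA2 l).trans_lt ((hS l hl).2.trans_lt' (by norm_num))) (m + 1 + 2 * s)
    (fun l hl => coprime_six_of_five_le (hS l hl).1 (hS l hl).2)
    (prod_le_of_sieveConstant_mul_le ha hb hk hy3 hy hS (fun l _ => hA l) hK)
  refine ⟨m + 1 + 2 * s + 6 * u, by grind, by omega, by omega, fun l hl hl2 => ?_⟩
  rcases eq_or_ne l 3 with rfl | hl3
  · have h6 : ((m + 1 + 2 * s + 6 * u : ℕ) : ZMod 3) = (m + 1 + 2 * s : ℕ) := by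
      rw [Nat.cast_add _ (6 * u), Nat.cast_mul, (by decide : ((6 : ℕ) : ZMod 3) = 0), zero_mul,
        add_zero]
    rw [h6]
    exact ⟨fun _ => hs3.1, fun _ => hs3.2⟩
  · have h5 : 5 ≤ l := hl.five_le_of_ne_two_of_ne_three hl2 hl3
    have hmem : l ∣ a * b → l ∈ S := fun h =>
      mem_filter.2 ⟨Nat.mem_primeFactors.2 ⟨hl, h, mul_ne_zero ha hb⟩, h5⟩
    refine ⟨fun h heq => havoid l (hmem (h.mul_right b)) ?_,
      fun h heq => havoid l (hmem (h.mul_left a)) ?_⟩ <;> simp [A, h, heq]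

end Sieve

section Insertion

lemma coprime_of_odd {x y : ℕ} (hx : Odd x) (h : ∀ l, l.Prime → l ≠ 2 → l ∣ x → ¬l ∣ y) :
    x.Coprime y :=
  Nat.coprime_of_dvd fun l hl hlx => h l hl (by rintro rfl; grind) hlx

lemma natCast_eq_of_dvd_sub {l p j : ℕ} (hj : j ≤ p) (h : l ∣ p - j) : (j : ZMod l) = p := by
  rw [← Nat.sub_add_cancel hj, Nat.cast_add, (ZMod.natCast_eq_zero_iff _ _).2 h, zero_add]

lemma cross_foldColumn_of_avoid {p j : ℕ} {c : ℕ × ℕ} (hj : Odd j) (hjp : j ≤ p) (hc : Odd c.1)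
    (hcop : c.1.Coprime c.2)
    (h : ∀ l, l.Prime → l ≠ 2 → l ∣ c.1 * c.2 →
      (j : ZMod l) ≠ if l ∣ c.1 then (p : ZMod l) else 0) :
    Cross (foldColumn p j) c := by
  rw [foldColumn_of_odd p hj]
  refine ⟨coprime_of_odd hj fun l hl hl2 hlj hlc => ?_,
    coprime_of_odd hc fun l hl hl2 hlc hlj => ?_⟩
  · have := h l hl hl2 (hlc.mul_left _)
    rw [if_neg fun hl1 => hl.not_dvd_one (hcop ▸ Nat.dvd_gcd hl1 hlc)] at this
    exact this ((ZMod.natCast_eq_zero_iff _ _).2 hlj)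
  · have := h l hl hl2 (hlc.mul_right _)
    rw [if_pos hlc] at this
    exact this (natCast_eq_of_dvd_sub hjp hlj)

lemma cross_foldColumn_succ_of_avoid {p j : ℕ} {d : ℕ × ℕ} (hp : Odd p) (hj : Odd j) (hjp : j < p)
    (hd : Odd d.1) (hcop : d.1.Coprime d.2)
    (h : ∀ l, l.Prime → l ≠ 2 → l ∣ d.1 * d.2 →
      (j : ZMod l) ≠ if l ∣ d.1 then (-1 : ZMod l) else p - 1) :
    Cross d (foldColumn p (j + 1)) := by
  rw [foldColumn_succ_of_odd p hj]
  refine ⟨coprime_of_odd hd fun l hl hl2 hld hlj => ?_,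
    coprime_of_odd (by grind) fun l hl hl2 hlj hld => ?_⟩
  · have := h l hl hl2 (hld.mul_right _)
    rw [if_pos hld] at this
    refine this (eq_neg_of_add_eq_zero_left ?_)
    exact_mod_cast (ZMod.natCast_eq_zero_iff _ _).2 hlj
  · have := h l hl hl2 (hld.mul_left _)
    rw [if_neg fun hl1 => hl.not_dvd_one (hcop ▸ Nat.dvd_gcd hl1 hld)] at this
    exact this (eq_sub_of_add_eq (mod_cast natCast_eq_of_dvd_sub hjp hlj))

theorem HasCrossLabeling.add_two_mul {m h K k y : ℕ} (hm : HasCrossLabeling m) (hm0 : m ≠ 0)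
    (hp : (2 * (m + h) + 1).Prime) (hKh : 6 * K ≤ h) (hk : k ≠ 0) (hy3 : 3 ≤ y)
    (hy : localFactor k y ≤ 1) (hK : sieveConstant k y * m ^ 4 ≤ K ^ k) :
    HasCrossLabeling (m + 2 * h) := by
  obtain ⟨L, hL, hchain⟩ := hm
  have hne : L ≠ [] := by
    rintro rfl
    exact hm0 hL.two_mul_length.symm
  have hmem : ∀ c ∈ L, (1 ≤ c.1 ∧ c.1 ≤ m) ∧ 1 ≤ c.2 ∧ c.2 ≤ m := fun c hc =>
    ⟨hL.mem_labels_iff.1 (mem_labels.2 ⟨c, hc, .inl rfl⟩),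
      hL.mem_labels_iff.1 (mem_labels.2 ⟨c, hc, .inr rfl⟩)⟩
  have hpos : ∀ c ∈ L, c.1 * c.2 ≠ 0 := fun c hc =>
    mul_ne_zero (by have := hmem c hc; omega) (by have := hmem c hc; omega)
  have hle : ∀ c ∈ L, c.1 * c.2 ≤ m * m := fun c hc =>
    Nat.mul_le_mul (hmem c hc).1.2 (hmem c hc).2.2
  set c := L.head hne
  set d := L.getLast hne
  have hc : c ∈ L := List.head_mem hne
  have hd : d ∈ L := List.getLast_mem hne
  set p := 2 * (m + h) + 1
  have hbound : sieveConstant k y * (c.1 * c.2 * (d.1 * d.2) : ℕ) ≤ K ^ k := by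
    refine (mul_le_mul_of_nonneg_left ?_ (sieveConstant_nonneg k y)).trans hK
    exact_mod_cast (Nat.mul_le_mul (hle c hc) (hle d hd)).trans_eq (by ring)
  obtain ⟨j, hj, hmj, hjK, havoid⟩ := exists_odd_avoiding
    (hL.two_mul_length ▸ even_two_mul _) (hpos c hc) (hpos d hd) hk hy3 hy hbound
    (fun l => if l ∣ c.1 then (p : ZMod l) else 0)
    (fun l => if l ∣ d.1 then (-1 : ZMod l) else p - 1)
  refine hL.hasCrossLabeling_insert hchain hne hp hmj (by omega) ?_ ?_
  · exact cross_foldColumn_of_avoid hj (by omega) (hL.odd c hc) (hL.coprime c hc)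
      fun l hl hl2 => (havoid l hl hl2).1
  · exact cross_foldColumn_succ_of_avoid (odd_two_mul_add_one _) hj (by omega) (hL.odd d hd)
      (hL.coprime d hd) fun l hl hl2 => (havoid l hl hl2).2

lemma localFactor_five_le_one : localFactor 5 37 ≤ 1 := by
  norm_num [localFactor]

lemma localFactor_six_le_one : localFactor 6 71 ≤ 1 := by
  norm_num [localFactor]

lemma sieveConstant_five_le : sieveConstant 5 37 ≤ 1050000 := by
  decide +kernel

lemma sieveConstant_six_le : sieveConstant 6 71 ≤ 200500000000 := by
  decide +kernel

end Insertion

section SmallCases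

open scoped Nat

lemma prime_of_coprime_factorial {n k : ℕ} (h1 : 1 < n) (hn : n < (k + 1) ^ 2)
    (h : n.Coprime k !) : n.Prime := by
  by_contra hnp
  have hk : n.minFac ≤ k := by
    have := Nat.minFac_sq_le_self h1.le hnp
    exact Nat.lt_succ_iff.1 (lt_of_pow_lt_pow_left₀ 2 (Nat.zero_le _) (this.trans_lt hn))
  exact (Nat.minFac_prime h1.ne').not_dvd_one
    (h ▸ Nat.dvd_gcd n.minFac_dvd (Nat.dvd_factorial n.minFac_pos hk))

/-- The values of `q` tried in the search for a prime `N + q`: they are `1` or odd primes. -/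
def offsets : List ℕ :=
  [1, 3, 5, 7, 11, 13, 17, 19, 23, 29, 31, 37, 41, 43, 47, 53, 59, 61, 67, 71, 73, 79, 83, 89, 97,
   101, 103, 107, 109, 113, 127, 131, 137, 139, 149]

lemma mem_offsets {q : ℕ} (hq : q ∈ offsets) : q = 1 ∨ q.Prime ∧ Odd q := by
  revert q
  decide +kernel

lemma exists_mem_offsets_prime_of_lt :
    ∀ N < 128, Even N → N ≠ 0 → ∃ q ∈ offsets, q ≤ N + 1 ∧ (N + q).Prime := by
  decide +kernel

lemma exists_mem_offsets_coprime :
    ∀ a < 64, ∀ b < 64, a ≠ 0 → ∃ q ∈ offsets, q ≤ 2 * (64 * a + b) + 1 ∧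
      (2 * (64 * a + b) + q).Coprime 128 ! := by
  decide +kernel

lemma exists_mem_offsets_prime {N : ℕ} (hN : Even N) (h0 : N ≠ 0) (hlt : N < 8192) :
    ∃ q ∈ offsets, q ≤ N + 1 ∧ (N + q).Prime := by
  rcases lt_or_ge N 128 with h | h
  · exact exists_mem_offsets_prime_of_lt N h hN h0
  · have hle : ∀ q ∈ offsets, q ≤ 149 := by decide
    obtain ⟨q, hq, hqN, hcop⟩ := exists_mem_offsets_coprime (N / 128) (by omega) (N / 2 % 64)
      (by omega) (by omega)
    rw [show 2 * (64 * (N / 128) + N / 2 % 64) = N by grind] at hqN hcop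
    have hq_le := hle q hq
    exact ⟨q, hq, hqN, prime_of_coprime_factorial (by omega) (by omega) hcop⟩

lemma hasCrossLabeling_of_lt {N : ℕ} (hN : Even N) (hlt : N < 8192) : HasCrossLabeling N := by
  rcases eq_or_ne N 0 with rfl | h0
  · exact ⟨[], isLabeling_zero, .nil⟩
  · obtain ⟨q, hq, hqN, hp⟩ := exists_mem_offsets_prime hN h0 hlt
    exact hasCrossLabeling_of_prime_add hN (mem_offsets hq) hqN hp

/-- The initial segment of `primeChain` whose members are tested for factors up to `300`. -/
def smallPrimes : List ℕ :=
  [8191, 8297, 8389, 8467, 8573, 8681, 8783, 8893, 9011, 9127, 9241, 9349, 9473, 9601, 9721, 9851,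
   9973, 10103, 10243, 10369, 10513, 10657, 10799, 10949, 11093, 11243, 11399, 11551, 11701,
   11867, 12037, 12211, 12379, 12553, 12721, 12907, 13093, 13267, 13463, 13649, 13841, 14033,
   14243, 14449, 14657, 14879, 15101, 15331, 15559, 15797, 16033, 16273, 16519, 16763, 17021,
   17257, 17519, 17791, 18061, 18341, 18617, 18913, 19213, 19507, 19819, 20129, 20443, 20773,
   21107, 21433, 21787, 22147, 22511, 22877, 23251, 23633, 24029, 24439, 24851, 25261, 25693,
   26119, 26573, 27031, 27487, 27967, 28447, 28949, 29453, 29959, 30497, 31039, 31601, 32173,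
   32749, 33349, 33961, 34591, 35227, 35879, 36551, 37223, 37907, 38629, 39367, 40123, 40897,
   41687, 42499, 43331, 44179, 45053, 45949, 46867, 47807, 48767, 49747, 50753, 51787, 52837,
   53927, 55021, 56167, 57331, 58537, 59771, 61043, 62347, 63671]

/-- The final segment of `primeChain`, whose members are tested for factors up to `41820`. -/
def largePrimes : List ℕ :=
  [65033, 66431, 67883, 69371, 70901, 72469, 74077, 75731, 77431, 79187, 80989, 82837, 84737,
   86693, 88681, 90749, 92867, 95063, 97327, 99643, 102043, 104513, 107057, 109673, 112363,
   115151, 117991, 120947, 124001, 127139, 130379, 133733, 137191, 140761, 144439, 148249,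
   152183, 156241, 160441, 164771, 169249, 173867, 178643, 183593, 188719, 194027, 199501,
   205187, 211073, 217169, 223481, 230017, 236783, 243809, 251099, 258659, 266491, 274627,
   283079, 291857, 300973, 310447, 320291, 330509, 341141, 352201, 363691, 375667, 388133,
   401119, 414643, 428731, 443419, 458729, 474671, 491333, 508727, 526871, 545827, 565637,
   586319, 607967, 630607, 654301, 679087, 705053, 732257, 760759, 790649, 821999, 854881,
   889411, 925669, 963763, 1003817, 1045907, 1090217, 1136869, 1186001, 1237763, 1292339,
   1349903, 1410653, 1474793, 1542571, 1614191, 1689967, 1770163, 1855039, 1945007, 2040407,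
   2141617, 2249063, 2363203, 2484539, 2613607, 2750999, 2897341, 3053359, 3219787, 3397487,
   3587347, 3790373, 4007659, 4240381, 4489861, 4757551, 5045023, 5354023, 5686507, 6044581,
   6430597, 6847157, 7297133, 7783757, 8310551, 8881529, 9501077, 10174127, 10906199, 11703469,
   12572837, 13522079, 14560019, 15696493, 16942637, 18311087, 19816151, 21474083, 23303383,
   25325123, 27563449, 30046031, 32804579, 35875589, 39301231, 43130231, 47419091, 52233547,
   57650081, 63758399, 70663499, 78488873, 87380231, 97510043, 109083157, 122343659, 137583527,
   155153249, 175475147, 199060231, 226529341, 258639929, 296320399, 340713887, 393234607,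
   455641019, 530130929, 619466161, 727136687, 857578411, 1016463823, 1211092543, 1450919731,
   1748276423]

/-- Primes ascending so slowly that `HasCrossLabeling.add_two_mul` applies between any two
consecutive ones. Each is the largest admissible successor of its predecessor. -/
def primeChain : List ℕ :=
  smallPrimes ++ largePrimes

lemma prime_of_mem_of_coprime_factorial {l : List ℕ} {k n : ℕ} (hl : l.prod.Coprime k !)
    (hbd : ∀ x ∈ l, 1 < x ∧ x < (k + 1) ^ 2) (hn : n ∈ l) : n.Prime :=
  prime_of_coprime_factorial (hbd n hn).1 (hbd n hn).2
    (Nat.Coprime.coprime_dvd_left (List.dvd_prod hn) hl)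

lemma coprime_factorial_mul {n a b : ℕ}
    (h : ∀ i < a, n.Coprime ((b * i + 1).ascFactorial b)) : n.Coprime (b * a)! := by
  induction a with
  | zero => simp
  | succ a ih =>
    rw [mul_add_one, ← Nat.factorial_mul_ascFactorial]
    exact (ih fun i hi => h i (hi.trans a.lt_succ_self)).mul_right (h a a.lt_succ_self)

lemma prime_of_mem_primeChain {p : ℕ} (hp : p ∈ primeChain) : p.Prime := by
  rcases List.mem_append.1 hp with hp | hp
  · exact prime_of_mem_of_coprime_factorial (k := 300) (by decide +kernel) (by decide +kernel) hp
  · -- Computing `41820 !` in one go would nest too deeply.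
    have hcop : largePrimes.prod.Coprime (204 * 205)! :=
      coprime_factorial_mul (by decide +kernel)
    exact prime_of_mem_of_coprime_factorial hcop (by decide +kernel) hp

lemma isChain_primeChain :
    primeChain.IsChain fun p q =>
      q ≤ 2 * p ∧ 1050000 * (q - 1 - p) ^ 4 ≤ ((2 * p + 1 - q) / 12) ^ 5 := by
  decide +kernel

lemma exists_consecutive_of_isChain {R : ℕ → ℕ → Prop} {l : List ℕ} (hl : l.IsChain R)
    (hne : l ≠ []) {N : ℕ} (hhead : l.head hne ≤ N) (hlast : N < l.getLast hne) :
    ∃ p q, q ∈ l ∧ R p q ∧ p ≤ N ∧ N < q := by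
  induction l with
  | nil => exact absurd rfl hne
  | cons a l ih =>
    cases l with
    | nil => exact absurd (hhead.trans_lt hlast) (lt_irrefl _)
    | cons b l =>
      rw [List.isChain_cons_cons] at hl
      rcases lt_or_ge N b with hb | hb
      · exact ⟨a, b, by simp, hl.1, hhead, hb⟩
      · obtain ⟨p, q, hq, h⟩ := ih hl.2 (List.cons_ne_nil b l) hb hlast
        exact ⟨p, q, List.mem_cons_of_mem a hq, h⟩

end SmallCases

section PrimeWindow

open ArithmeticFunction hiding log
open Chebyshev Finset Real
open scoped Nat

lemma log_factorial_eq_sum_vonMangoldt {N M : ℕ} (h : N ≤ M) :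
    log N ! = ∑ d ∈ Ioc 0 M, Λ d * ((N / d : ℕ) : ℝ) := by
  calc log N ! = ∑ n ∈ Ioc 0 N, log n := by
        induction N with
        | zero => simp
        | succ N ih =>
          rw [Nat.factorial_succ, Nat.cast_mul, log_mul (by positivity) (by positivity),
            sum_Ioc_succ_top N.zero_le, ih (by omega), add_comm]
    _ = ∑ d ∈ Ioc 0 N, Λ d * ((N / d : ℕ) : ℝ) := by
        simp only [← sum_Ioc_mul_zeta_eq_sum, vonMangoldt_mul_zeta, log_apply]
    _ = ∑ d ∈ Ioc 0 M, Λ d * ((N / d : ℕ) : ℝ) := by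
        refine sum_subset (Ioc_subset_Ioc_right h) fun d hM hN => ?_
        rw [Nat.div_eq_of_lt (by simp only [mem_Ioc] at hM hN; omega), Nat.cast_zero, mul_zero]

lemma psi_eq_sum_vonMangoldt_ite {N M : ℕ} (h : N ≤ M) :
    ψ N = ∑ d ∈ Ioc 0 M, Λ d * ((if d ≤ N then 1 else 0 : ℕ) : ℝ) := by
  simp only [psi, Nat.floor_natCast, Nat.cast_ite, Nat.cast_one, Nat.cast_zero, mul_ite, mul_one,
    mul_zero, ← sum_filter]
  congr 1
  ext d
  simp only [mem_Ioc, mem_filter]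
  omega

lemma mul_div_eq_mul_div_add_mul_mod_div (k n : ℕ) {d : ℕ} (hd : 0 < d) :
    k * n / d = k * (n / d) + k * (n % d) / d := by
  conv_lhs => rw [← Nat.div_add_mod n d, mul_add, mul_left_comm, Nat.mul_add_div hd]

lemma log_factorial_two_mul (n : ℕ) :
    log (2 * n)! = 2 * log n ! + log n.centralBinom := by
  rw [← Nat.choose_mul_factorial_mul_factorial (show n ≤ 2 * n by omega),
    ← Nat.centralBinom_eq_two_mul_choose, show 2 * n - n = n by omega, Nat.cast_mul, Nat.cast_mul,
    log_mul (by simp [n.centralBinom_ne_zero, n.factorial_ne_zero]) (by positivity),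
    log_mul (by simp [n.centralBinom_ne_zero]) (by positivity)]
  ring

lemma log_centralBinom_le (n : ℕ) : log n.centralBinom ≤ n * log 4 := by
  rw [← log_pow]
  exact log_le_log (mod_cast n.centralBinom_pos) (mod_cast n.centralBinom_le_four_pow)

lemma le_log_centralBinom {n : ℕ} (hn : 0 < n) :
    n * log 4 - log (2 * n) ≤ log n.centralBinom := by
  rw [sub_le_iff_le_add, ← log_pow,
    ← log_mul (mod_cast n.centralBinom_ne_zero) (by positivity), mul_comm]
  exact log_le_log (by positivity)
    (mod_cast Nat.four_pow_le_two_mul_self_mul_centralBinom n hn)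

lemma psi_two_mul_sub_psi_le (n : ℕ) : ψ (2 * n : ℕ) - ψ n ≤ n * log 4 := by
  have hfloor : ∀ d ∈ Ioc 0 (2 * n), (if d ≤ 2 * n then 1 else 0) + 2 * (n / d) ≤
      2 * n / d + if d ≤ n then 1 else 0 := by
    intro d hd
    obtain ⟨hd0, hd2⟩ := mem_Ioc.1 hd
    rw [if_pos hd2]
    split_ifs with h
    · rw [mul_div_eq_mul_div_add_mul_mod_div 2 n hd0, add_comm, add_le_add_iff_right]
      exact Nat.le_add_right _ _
    · have := (Nat.one_le_div_iff hd0).2 hd2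
      rw [Nat.div_eq_of_lt (not_le.1 h)]
      omega
  have hpsi : ψ (2 * n : ℕ) + 2 * log n ! ≤ log (2 * n)! + ψ n := by
    rw [psi_eq_sum_vonMangoldt_ite le_rfl, psi_eq_sum_vonMangoldt_ite (show n ≤ 2 * n by omega),
      log_factorial_eq_sum_vonMangoldt (show n ≤ 2 * n by omega),
      log_factorial_eq_sum_vonMangoldt le_rfl, mul_sum, ← sum_add_distrib, ← sum_add_distrib]
    refine sum_le_sum fun d hd => ?_
    rw [mul_left_comm, ← mul_add, ← mul_add]
    exact mul_le_mul_of_nonneg_left (mod_cast hfloor d hd) vonMangoldt_nonneg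
  linarith [log_factorial_two_mul n, log_centralBinom_le n]

lemma chebyshev_floor_le {t d : ℕ} (hd : 0 < d) :
    30 * t / d + 5 * t / d + (if d ≤ 10 * t then 1 else 0) ≤
      15 * t / d + 2 * (10 * t / d) + (if d ≤ 30 * t then 1 else 0) +
        if d ≤ 6 * t then 1 else 0 := by
  obtain ⟨n, hn⟩ : ∃ n, n = 5 * t := ⟨_, rfl⟩
  rw [show 30 * t = 6 * n by omega, show 15 * t = 3 * n by omega, show 10 * t = 2 * n by omega,
    ← hn, mul_div_eq_mul_div_add_mul_mod_div 6 n hd, mul_div_eq_mul_div_add_mul_mod_div 3 n hd,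
    mul_div_eq_mul_div_add_mul_mod_div 2 n hd]
  have hs := Nat.mod_lt n hd
  have hn' := Nat.div_add_mod n d
  have h6 := Nat.div_add_mod (6 * (n % d)) d
  have h3 := Nat.div_add_mod (3 * (n % d)) d
  have h2 := Nat.div_add_mod (2 * (n % d)) d
  have h6' := Nat.mod_lt (6 * (n % d)) hd
  have h3' := Nat.mod_lt (3 * (n % d)) hd
  have h2' := Nat.mod_lt (2 * (n % d)) hd
  have b6 : 6 * (n % d) / d < 6 := by rw [Nat.div_lt_iff_lt_mul hd]; omega
  have b3 : 3 * (n % d) / d < 3 := by rw [Nat.div_lt_iff_lt_mul hd]; omega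
  have b2 : 2 * (n % d) / d < 2 := by rw [Nat.div_lt_iff_lt_mul hd]; omega
  generalize 6 * (n % d) / d = a at *
  generalize 3 * (n % d) / d = b at *
  generalize 2 * (n % d) / d = c at *
  rcases Nat.eq_zero_or_pos (n / d) with hq | hq
  · rw [hq] at hn' ⊢
    interval_cases a <;> interval_cases b <;> interval_cases c <;> split_ifs <;> omega
  · have : d ≤ n := (Nat.one_le_div_iff hd).1 hq
    rw [if_pos (by omega), if_pos (by omega), if_pos (by omega)]
    interval_cases a <;> interval_cases b <;> interval_cases c <;> omega

lemma three_pow_mul_ascFactorial_le (n : ℕ) {k : ℕ} (hk : k ≤ n) :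
    3 ^ k * (n + 1).ascFactorial k ≤ 2 ^ k * (2 * n + 1).ascFactorial k := by
  induction k with
  | zero => simp
  | succ k ih =>
    rw [pow_succ, pow_succ, Nat.ascFactorial_succ, Nat.ascFactorial_succ]
    calc 3 ^ k * 3 * ((n + 1 + k) * (n + 1).ascFactorial k)
        = 3 * (n + 1 + k) * (3 ^ k * (n + 1).ascFactorial k) := by ring
      _ ≤ 2 * (2 * n + 1 + k) * (2 ^ k * (2 * n + 1).ascFactorial k) :=
        Nat.mul_le_mul (by omega) (ih (by omega))
      _ = 2 ^ k * 2 * ((2 * n + 1 + k) * (2 * n + 1).ascFactorial k) := by ring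

lemma le_log_factorial_add_log_factorial (n : ℕ) :
    2 * log (2 * n)! + n * log (3 / 2) ≤ log (3 * n)! + log n ! := by
  have hle : (2 * n)! ^ 2 * 3 ^ n ≤ (3 * n)! * n ! * 2 ^ n := by
    have h2 : (2 * n)! = n ! * (n + 1).ascFactorial n := by
      rw [Nat.factorial_mul_ascFactorial, two_mul]
    have h3 : (3 * n)! = (2 * n)! * (2 * n + 1).ascFactorial n := by
      rw [Nat.factorial_mul_ascFactorial, ← Nat.succ_mul]
    calc (2 * n)! ^ 2 * 3 ^ n
        = (2 * n)! * n ! * (3 ^ n * (n + 1).ascFactorial n) := by rw [sq]; nth_rw 2 [h2]; ring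
      _ ≤ (2 * n)! * n ! * (2 ^ n * (2 * n + 1).ascFactorial n) :=
        Nat.mul_le_mul_left _ (three_pow_mul_ascFactorial_le n le_rfl)
      _ = (3 * n)! * n ! * 2 ^ n := by rw [h3]; ring
  have hlog := log_le_log (by positivity) (Nat.cast_le (α := ℝ).2 hle)
  push_cast at hlog
  rw [log_mul (by positivity) (by positivity), log_mul (by positivity) (by positivity),
    log_mul (by positivity) (by positivity), log_pow, log_pow, log_pow] at hlog
  rw [log_div three_ne_zero two_ne_zero]
  push_cast at hlog ⊢
  linarith

-- Chebyshev's method applied to `(30 * t)! * (5 * t)! / ((15 * t)! * (10 * t)! ^ 2)`.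
lemma le_psi_sub_psi_add_psi {t : ℕ} (ht : 0 < t) :
    15 * t * log 4 + 5 * t * log (3 / 2) - log (30 * t) ≤
      ψ (30 * t : ℕ) - ψ (10 * t : ℕ) + ψ (6 * t : ℕ) := by
  have hpsi : log (30 * t)! + log (5 * t)! + ψ (10 * t : ℕ) ≤
      log (15 * t)! + 2 * log (10 * t)! + ψ (30 * t : ℕ) + ψ (6 * t : ℕ) := by
    rw [psi_eq_sum_vonMangoldt_ite (show 10 * t ≤ 30 * t by omega),
      psi_eq_sum_vonMangoldt_ite (show 6 * t ≤ 30 * t by omega),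
      psi_eq_sum_vonMangoldt_ite (le_refl (30 * t)),
      log_factorial_eq_sum_vonMangoldt (show 5 * t ≤ 30 * t by omega),
      log_factorial_eq_sum_vonMangoldt (show 10 * t ≤ 30 * t by omega),
      log_factorial_eq_sum_vonMangoldt (show 15 * t ≤ 30 * t by omega),
      log_factorial_eq_sum_vonMangoldt (le_refl (30 * t)), mul_sum]
    simp only [← sum_add_distrib, mul_left_comm (2 : ℝ), ← mul_add]
    exact sum_le_sum fun d hd => mul_le_mul_of_nonneg_left
      (mod_cast chebyshev_floor_le (mem_Ioc.1 hd).1) vonMangoldt_nonneg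
  have hcentral := log_factorial_two_mul (15 * t)
  have hcentral' := le_log_centralBinom (show 0 < 15 * t by omega)
  have hasc := le_log_factorial_add_log_factorial (5 * t)
  simp only [← mul_assoc, Nat.reduceMul] at hcentral hasc
  push_cast at hcentral' hasc
  rw [← mul_assoc] at hcentral'
  norm_num at hcentral'
  linarith

lemma sqrt_mul_log_le {x : ℝ} (hx : 2 ^ 28 ≤ x) : √x * log x ≤ x / 800 := by
  have hx0 : 0 < x := by linarith
  have hexp : exp 2 ≤ 2 ^ 28 := by
    rw [← le_log_iff_exp_le (by norm_num), log_pow]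
    norm_num
    linarith [log_two_gt_d9]
  have hsqrt : √(2 ^ 28 : ℝ) = 2 ^ 14 := by
    rw [show (2 : ℝ) ^ 28 = (2 ^ 14) ^ 2 by norm_num, sqrt_sq (by norm_num)]
  have hanti := log_div_sqrt_antitoneOn hexp (hexp.trans hx) hx
  simp only [hsqrt, log_pow] at hanti
  calc √x * log x = x * (log x / √x) := by
        rw [mul_div_left_comm, mul_comm, div_sqrt]
    _ ≤ x * (1 / 800) := by
        refine mul_le_mul_of_nonneg_left (hanti.trans ?_) hx0.le
        norm_num
        linarith [log_two_lt_d9]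
    _ = x / 800 := by ring

lemma theta_twenty_mul_lt {t : ℕ} (ht : 2 ^ 26 ≤ t) : θ (20 * t : ℕ) < θ (30 * t : ℕ) := by
  have htR : (2 : ℝ) ^ 26 ≤ t := mod_cast ht
  have hlow := le_psi_sub_psi_add_psi (show 0 < t by omega)
  have hmid := psi_two_mul_sub_psi_le (10 * t)
  have h6 := psi_le (x := (6 * t : ℕ)) (by norm_cast; omega)
  have h30 := psi_sub_theta_le (x := (30 * t : ℕ)) (by norm_cast; omega)
  have e6 := sqrt_mul_log_le (x := (6 * t : ℕ)) (by push_cast; linarith)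
  have e30 := sqrt_mul_log_le (x := (30 * t : ℕ)) (by push_cast; linarith)
  have hlog : log (30 * t) ≤ 30 * t / 800 := by
    refine (le_mul_of_one_le_left (log_nonneg (by linarith)) ?_).trans
      (sqrt_mul_log_le (x := 30 * t) (by linarith))
    exact one_le_sqrt.2 (by linarith)
  have hlog4 : log 4 = 2 * log 2 := by
    rw [show (4 : ℝ) = 2 ^ 2 by norm_num, log_pow, Nat.cast_two]
  have hlog32 : 1 / 3 ≤ log (3 / 2) := by
    have := one_sub_inv_le_log_of_pos (show (0 : ℝ) < 3 / 2 by norm_num)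
    norm_num at this ⊢
    exact this
  have h20 := theta_le_psi (20 * t : ℕ)
  have htlog : t * log 2 ≤ t * 0.6931471808 :=
    mul_le_mul_of_nonneg_left log_two_lt_d9.le t.cast_nonneg
  have htlog' := mul_le_mul_of_nonneg_left hlog32 (t.cast_nonneg (α := ℝ))
  rw [← mul_assoc] at hmid
  push_cast at *
  norm_num at hmid
  rw [hlog4] at *
  linarith

lemma exists_prime_of_theta_lt {a b : ℕ} (h : θ a < θ b) : ∃ p, p.Prime ∧ a < p ∧ p ≤ b := by
  by_contra! hno
  refine h.not_ge ?_
  simp only [theta, Nat.floor_natCast]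
  refine sum_le_sum_of_subset_of_nonneg (fun p hp => ?_) fun p _ _ => log_natCast_nonneg p
  simp only [mem_filter, mem_Ioc] at hp ⊢
  have := hno p
  grind

end PrimeWindow

section Existence

lemma HasCrossLabeling.even {m : ℕ} (hm : HasCrossLabeling m) : Even m := by
  obtain ⟨L, hL, -⟩ := hm
  exact hL.two_mul_length ▸ even_two_mul _

lemma HasCrossLabeling.of_prime_add_add_one {N m k y C : ℕ} (hm : HasCrossLabeling m)
    (hN : Even N) (hmN : m ≤ N) (hp : (N + m + 1).Prime) (hk : k ≠ 0) (hy3 : 3 ≤ y)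
    (hy : localFactor k y ≤ 1) (hC : sieveConstant k y ≤ C)
    (hK : C * m ^ 4 ≤ ((N - m) / 12) ^ k) : HasCrossLabeling N := by
  rcases eq_or_ne m 0 with rfl | hm0
  · exact hasCrossLabeling_of_prime_add hN (.inl rfl) (by omega) hp
  · obtain ⟨h, hh⟩ := (Nat.even_sub hmN).2 (iff_of_true hN hm.even)
    obtain rfl : N = m + 2 * h := by omega
    refine hm.add_two_mul (K := (m + 2 * h - m) / 12) hm0 ?_ (by omega) hk hy3 hy ?_
    · rwa [show 2 * (m + h) + 1 = m + 2 * h + m + 1 by ring]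
    · exact (mul_le_mul_of_nonneg_right hC (by positivity)).trans (mod_cast hK)

lemma even_of_prime_add_add_one {N m : ℕ} (hN : Even N) (hmN : m < N) (hp : (N + m + 1).Prime) :
    Even m := by
  have := hp.eq_two_or_odd'
  grind

lemma exists_prime_of_le_of_lt {N : ℕ} (hlow : 8192 ≤ N) (hhigh : N < 1600000000) :
    ∃ m < N, (N + m + 1).Prime ∧ 1050000 * m ^ 4 ≤ ((N - m) / 12) ^ 5 := by
  obtain ⟨p, q, hq, ⟨hqp, hpq⟩, hpN, hNq⟩ := exists_consecutive_of_isChain isChain_primeChain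
    (by decide) (N := N) (by change 8191 ≤ N; omega) (by change N < 1748276423; omega)
  obtain ⟨m, rfl⟩ := Nat.exists_eq_add_of_lt hNq
  refine ⟨m, by omega, prime_of_mem_primeChain hq, ?_⟩
  calc 1050000 * m ^ 4 ≤ 1050000 * (N + m + 1 - 1 - p) ^ 4 := by gcongr; omega
    _ ≤ ((2 * p + 1 - (N + m + 1)) / 12) ^ 5 := hpq
    _ ≤ ((N - m) / 12) ^ 5 := by gcongr 1; omega

lemma exists_prime_of_le {N : ℕ} (hN : 1600000000 ≤ N) :
    ∃ m < N, (N + m + 1).Prime ∧ 200500000000 * m ^ 4 ≤ ((N - m) / 12) ^ 6 := by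
  obtain ⟨q, hq, hlow, hhigh⟩ := exists_prime_of_theta_lt
    (theta_twenty_mul_lt (t := (N + 19) / 20) (by omega))
  obtain ⟨m, rfl⟩ := Nat.exists_eq_add_of_lt (show N < q by omega)
  refine ⟨m, by omega, hq, ?_⟩
  set K := (N - m) / 12
  have hmK : 100 * m ≤ 1201 * K := by omega
  have hK : 66666000 ≤ K := by omega
  refine Nat.le_of_mul_le_mul_left ?_ (show 0 < 100 ^ 4 by norm_num)
  calc 100 ^ 4 * (200500000000 * m ^ 4) = 200500000000 * (100 * m) ^ 4 := by ring
    _ ≤ 200500000000 * (1201 * K) ^ 4 := by gcongr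
    _ = 200500000000 * 1201 ^ 4 * K ^ 4 := by ring
    _ ≤ 100 ^ 4 * 66666000 ^ 2 * K ^ 4 := by exact Nat.mul_le_mul_right _ (by norm_num)
    _ ≤ 100 ^ 4 * K ^ 2 * K ^ 4 := by gcongr
    _ = 100 ^ 4 * K ^ 6 := by ring

theorem hasCrossLabeling {N : ℕ} (hN : Even N) : HasCrossLabeling N := by
  induction N using Nat.strong_induction_on with
  | _ N ih =>
    rcases lt_or_ge N 8192 with hlt | hge
    · exact hasCrossLabeling_of_lt hN hlt
    rcases lt_or_ge N 1600000000 with hlt | hge'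
    · obtain ⟨m, hmN, hp, hK⟩ := exists_prime_of_le_of_lt hge hlt
      exact (ih m hmN (even_of_prime_add_add_one hN hmN hp)).of_prime_add_add_one hN hmN.le hp
        (by norm_num) (by norm_num) localFactor_five_le_one (mod_cast sieveConstant_five_le) hK
    · obtain ⟨m, hmN, hp, hK⟩ := exists_prime_of_le hge'
      exact (ih m hmN (even_of_prime_add_add_one hN hmN hp)).of_prime_add_add_one hN hmN.le hp
        (by norm_num) (by norm_num) localFactor_six_le_one (mod_cast sieveConstant_six_le) hK

end Existence

end CrossLadder

/-- For every integer `n ≥ 2` there is a bijection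
`f : {1,...,n} × {1,2} → {1,...,2n}` such that every square of the `n`-ladder fulfils
the cross condition. -/
theorem ladder_has_cross_condition_labeling (n : ℕ) (hn : 2 ≤ n) :
    ∃ f : ℕ × ℕ → ℕ,
      Set.BijOn f ((Set.Icc 1 n) ×ˢ (Set.Icc 1 2)) (Set.Icc 1 (2 * n)) ∧
      ∀ i : ℕ, 1 ≤ i → i ≤ n - 1 →
        Nat.gcd (f (i, 1)) (f (i, 2)) = 1 ∧
        Nat.gcd (f (i + 1, 1)) (f (i + 1, 2)) = 1 ∧
        Nat.gcd (f (i, 1)) (f (i + 1, 2)) = 1 ∧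
        Nat.gcd (f (i + 1, 1)) (f (i, 2)) = 1 := by
  obtain ⟨f, hf, hcol, hcross⟩ := (CrossLadder.hasCrossLabeling (even_two_mul n)).exists_bijOn
  refine ⟨f, hf, fun i h1 hi => ?_⟩
  obtain ⟨h12, h21⟩ := hcross i h1 (by omega)
  exact ⟨hcol i ⟨h1, by omega⟩, hcol (i + 1) ⟨by omega, by omega⟩, h12, h21⟩
end
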